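/- arXiv:1107.1700 — 2 statements merged into one kernel-verified Lean document; each statement's English description precedes it below -/
import Mathlib

section
/- Let Φ : 𝔸 → ℂ be Φ(x) = 1_{[0,1]}(x_∞) · ∏_p 1_{ℤ_p}(x_p). For j ∈ ℤ and each prime m, let V_j^{[m]} ⊆ L²(𝔸, μ) be the closed linear span of the functions x ↦ 2^{j/2} 1_{[0,1]}(2^j x_∞ − a_∞) · ∏_{q≤m} q^{j/2} 1_{ℤ_q}(q^{−j} x_q − a_q) · ∏_{q>m} 1_{ℤ_q}(x_q), over all a_∞ ∈ ℤ and a_q ∈ I_q for primes q ≤ m; let V_j be the closure of the linear span of ⋃_m V_j^{[m]}. Then: (a) V_j ⊆ V_{j+1} for all j ∈ ℤ; (b) ⋃_{j∈ℤ} V_j is dense in L²(𝔸, μ); (c) ⋂_{j∈ℤ} V_j = {0}; (d) for each prime m and each j ∈ ℤ, f ∈ V_j^{[m]} if and only if D_m f ∈ V_{j+1}^{[m]}, where (D_m f)(x) = (2 · ∏_{q≤m} q)^{1/2} · f(2x_∞, x_2/2, x_3/3, …, x_m/m, (x_q)_{q>m}); (e) the functions x ↦ Φ(x − â), where â ranges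 over I_𝔸 = {â ∈ 𝔸 : â_∞ ∈ ℤ, â_p ∈ I_p for all p, and â_p = 0 for all but finitely many p}, form an orthonormal basis of V_0. -/
open MeasureTheory Complex
open scoped Classical

noncomputable section

variable (p : ℕ) [Fact p.Prime]

instance : MeasurableSpace ℚ_[p] := borel _
instance : BorelSpace ℚ_[p] := ⟨rfl⟩

instance (q : Nat.Primes) : Fact (q : ℕ).Prime := ⟨q.2⟩

/-- The indicator function of `ℤ_p` inside `ℚ_p`. -/
def indZ (x : ℚ_[p]) : ℂ := if ‖x‖ ≤ 1 then 1 else 0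

/-- The fractional part of a `p`-adic number: the unique rational `r ∈ ℤ[1/p] ∩ [0,1)`
with `x - r ∈ ℤ_p`. -/
def padicFract (x : ℚ_[p]) : ℚ :=
  if h : ∃ r : ℚ, (0 ≤ r ∧ r < 1 ∧ ∃ (m : ℤ) (n : ℕ), r = m / p ^ n) ∧ ‖x - (r : ℚ_[p])‖ ≤ 1
  then h.choose else 0

/-- The standard additive character `χ_p` of `ℚ_p`. -/
def padicChar (x : ℚ_[p]) : ℂ := Complex.exp (2 * Real.pi * Complex.I * (padicFract p x : ℂ))

/-- The Kozyrev wavelet `ψ⁰_{k;ja}`. -/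
def kozyrev (k : ℕ) (j : ℤ) (a : ℚ_[p]) (x : ℚ_[p]) : ℂ :=
  ((p : ℝ) ^ ((j : ℝ) / 2) : ℝ) *
    padicChar p ((k : ℚ_[p]) / (p : ℚ_[p]) * ((p : ℚ_[p]) ^ (-j) * x - a)) *
    indZ p ((p : ℚ_[p]) ^ (-j) * x - a)

/-- The set `I_p = ℤ[1/p] ∩ [0,1)` of shifts, viewed inside `ℚ_p`. -/
def Ip : Set ℚ_[p] := {a | ∃ (m n : ℕ), m < p ^ n ∧ a = (m : ℚ_[p]) / (p : ℚ_[p]) ^ n}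


/-- The adele ring of `ℚ`, as the restricted product of `ℝ` and of the fields `ℚ_p`
with respect to the subrings `ℤ_p`. -/
def Adele : Type :=
  {x : ℝ × (∀ q : Nat.Primes, ℚ_[(q : ℕ)]) //
    ∀ᶠ q : Nat.Primes in Filter.cofinite, ‖x.2 q‖ ≤ 1}

instance : MeasurableSpace Adele := by unfold Adele; infer_instance

/-- The set of primes `q ≤ m` is finite. -/
theorem primesLE_finite (m : Nat.Primes) : {q : Nat.Primes | (q : ℕ) ≤ (m : ℕ)}.Finite := by
  have h : {q : Nat.Primes | (q : ℕ) ≤ (m : ℕ)}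
      = (fun q : Nat.Primes => (q : ℕ)) ⁻¹' Set.Iic (m : ℕ) := rfl
  rw [h]
  exact Set.Finite.preimage (Nat.Primes.coe_nat_injective.injOn) (Set.finite_Iic _)

open MeasureTheory

/-- The indicator function of the unit interval `[0,1] ⊆ ℝ`. -/
def indI (t : ℝ) : ℂ := if t ∈ Set.Icc (0 : ℝ) 1 then 1 else 0

/-- The adelic scaling function `Φ(x) = 1_{[0,1]}(x_∞) ∏_q 1_{ℤ_q}(x_q)`. -/
def PhiAdele (x : Adele) : ℂ := indI x.1.1 * ∏' q : Nat.Primes, indZ q (x.1.2 q)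

/-- The shifted scaling functions generating `V_j^{[m]}`:
`x ↦ 2^{j/2} 1_{[0,1]}(2^j x_∞ - a_∞) ∏_{q ≤ m} q^{j/2} 1_{ℤ_q}(q^{-j}x_q - a_q)
∏_{q > m} 1_{ℤ_q}(x_q)`. -/
def scalFn (j : ℤ) (m : Nat.Primes) (aI : ℤ)
    (a : ∀ q : Nat.Primes, ℚ_[(q : ℕ)]) (x : Adele) : ℂ :=
  (((2 : ℝ) ^ ((j : ℝ) / 2) : ℝ) : ℂ) * indI ((2 : ℝ) ^ j * x.1.1 - aI) *
    ∏' q : Nat.Primes,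
      (if (q : ℕ) ≤ (m : ℕ) then
        ((((q : ℕ) : ℝ) ^ ((j : ℝ) / 2) : ℝ) : ℂ) *
          indZ q (((q : ℕ) : ℚ_[(q : ℕ)]) ^ (-j) * x.1.2 q - a q)
      else indZ q (x.1.2 q))

/-- `V_j^{[m]}`: the closed linear span in `L²(𝔸, μ)` of the shifted scaling functions of
scale `j`, with shifts `a_∞ ∈ ℤ` and `a_q ∈ I_q` for primes `q ≤ m`. -/
def Vjm (μ : Measure Adele) (j : ℤ) (m : Nat.Primes) : Submodule ℂ (Lp ℂ 2 μ) :=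
  (Submodule.span ℂ {g : Lp ℂ 2 μ | ∃ (aI : ℤ) (a : ∀ q : Nat.Primes, ℚ_[(q : ℕ)]),
    (∀ q : Nat.Primes, (q : ℕ) ≤ (m : ℕ) → a q ∈ Ip q) ∧
    (g : Adele → ℂ) =ᵐ[μ] scalFn j m aI a}).topologicalClosure

/-- `V_j`: the closure of the linear span of `⋃_m V_j^{[m]}`. -/
def VjAd (μ : Measure Adele) (j : ℤ) : Submodule ℂ (Lp ℂ 2 μ) :=
  (⨆ m : Nat.Primes, Vjm μ j m).topologicalClosure

/-- The dilation `x ↦ (2x_∞, x_2/2, …, x_m/m, (x_q)_{q>m})` of an adele. -/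
def dilMap (m : Nat.Primes) (x : Adele) : Adele :=
  ⟨(2 * x.1.1, fun q =>
      if (q : ℕ) ≤ (m : ℕ) then x.1.2 q / ((q : ℕ) : ℚ_[(q : ℕ)]) else x.1.2 q), by
    have hev : ∀ᶠ q : Nat.Primes in Filter.cofinite, ¬ ((q : ℕ) ≤ (m : ℕ)) := by
      rw [Filter.eventually_cofinite]
      simpa using primesLE_finite m
    filter_upwards [x.2, hev] with q h1 h2
    simp only [if_neg h2]
    exact h1⟩

/-- The shifted adelic scaling function `x ↦ Φ(x - â)`, for
`â = (a_∞, (a_q)_q) ∈ I_𝔸`. -/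
def shiftPhi (aI : ℤ) (a : ∀ q : Nat.Primes, ℚ_[(q : ℕ)]) (x : Adele) : ℂ :=
  indI (x.1.1 - aI) * ∏' q : Nat.Primes, indZ q (x.1.2 q - a q)

/-- The adelic set of shifts `I_𝔸`: `â_∞ ∈ ℤ`, `â_q ∈ I_q` for all `q`, and `â_q = 0` for
all but finitely many `q`. -/
def IAdele : Type :=
  ℤ × {a : ∀ q : Nat.Primes, ℚ_[(q : ℕ)] //
        (∀ q : Nat.Primes, a q ∈ Ip q) ∧ {q : Nat.Primes | a q ≠ 0}.Finite}

/-!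
A *cell* is the product of a half-open dyadic interval and of `p`-adic balls, almost all of which
are translates of `ℤ_p`. Cells of a given level are countably many, pairwise disjoint and cover
`𝔸`; all cells together form a π-system generating the σ-algebra. Up to a null set and a constant,
the scaling functions are the indicators of cells, so `f` is orthogonal to `V_j^{[m]}` iff its
integrals over the cells of the corresponding level, integral above `m`, vanish.

* (a) A cell is a disjoint union of finer cells, whence `(V_{j+1}^{[m]})ᗮ ≤ (V_j^{[m]})ᗮ`.
* (b) Similarly, all cell integrals of a vector orthogonal to every `V_j` vanish, so it is zero.
* (c) Vectors of `V_j` are invariant under translation of the 2-adic component by `c` with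
  `‖c‖ ≤ 2^(-j)`. A vector `f` of the intersection is thus invariant under all such translations,
  and has the same inner product with each of infinitely many disjoint translates of a cell. By
  Bessel's inequality this inner product is zero.
* (d) `dilMap m` divides the measure by a constant, since it does so on cells; hence `D_m` is an
  isometry, and it maps the generators of `V_j^{[m]}` onto those of `V_{j+1}^{[m]}`.
* (e) By uniqueness of fractional parts, the cells of level `0` are in bijection with `I_𝔸`.
-/

section Padic

variable {p}

theorem exists_mem_Ip_norm_sub_le_one (y : ℚ_[p]) : ∃ a ∈ Ip p, ‖y - a‖ ≤ 1 := by
  have hp : p.Prime := Fact.out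
  have hp0 : (p : ℚ_[p]) ≠ 0 := mod_cast hp.ne_zero
  have hp1 : (1 : ℝ) < p := mod_cast hp.one_lt
  obtain ⟨n, hn⟩ := pow_unbounded_of_one_lt ‖y‖ hp1
  have hint : ‖(p : ℚ_[p]) ^ n * y‖ ≤ 1 := by
    rw [norm_mul, norm_pow, Padic.norm_p, inv_pow, inv_mul_le_iff₀ (by positivity), mul_one]
    exact hn.le
  let z : ℤ_[p] := ⟨(p : ℚ_[p]) ^ n * y, hint⟩
  refine ⟨(z.appr n : ℚ_[p]) / (p : ℚ_[p]) ^ n, ⟨z.appr n, n, z.appr_lt n, rfl⟩, ?_⟩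
  have happr : ‖(p : ℚ_[p]) ^ n * y - z.appr n‖ ≤ (p : ℝ) ^ (-(n : ℤ)) := by
    have := (PadicInt.norm_le_pow_iff_mem_span_pow _ n).2 (z.appr_spec n)
    rwa [PadicInt.norm_def, PadicInt.coe_sub, PadicInt.coe_natCast] at this
  calc ‖y - (z.appr n : ℚ_[p]) / (p : ℚ_[p]) ^ n‖
      = ‖((p : ℚ_[p]) ^ n * y - z.appr n) * (p : ℚ_[p]) ^ (-(n : ℤ))‖ := by
        rw [zpow_neg, zpow_natCast]
        field_simp
    _ ≤ (p : ℝ) ^ (-(n : ℤ)) * (p : ℝ) ^ (n : ℤ) := by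
        rw [norm_mul, Padic.norm_p_zpow, neg_neg]
        gcongr
    _ = 1 := by rw [← zpow_add₀ (by positivity), neg_add_cancel, zpow_zero]

theorem eq_of_mem_Ip_of_norm_sub_le_one {a b : ℚ_[p]} (ha : a ∈ Ip p) (hb : b ∈ Ip p)
    (hab : ‖a - b‖ ≤ 1) : a = b := by
  have hp : p.Prime := Fact.out
  have hp0 : (p : ℚ_[p]) ≠ 0 := mod_cast hp.ne_zero
  obtain ⟨m, n, hm, rfl⟩ := ha
  obtain ⟨k, l, hk, rfl⟩ := hb
  let d : ℤ := m * p ^ l - k * p ^ n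
  have hsub : (m : ℚ_[p]) / (p : ℚ_[p]) ^ n - (k : ℚ_[p]) / (p : ℚ_[p]) ^ l
      = d * (p : ℚ_[p]) ^ (-((n + l : ℕ) : ℤ)) := by
    rw [zpow_neg, zpow_natCast, pow_add]
    push_cast [d]
    field_simp
  have hdvd : (p : ℤ) ^ (n + l) ∣ d := by
    rwa [← Padic.norm_int_le_pow_iff_dvd, zpow_neg, ← one_div,
      le_div_iff₀ (zpow_pos (mod_cast hp.pos) _), ← neg_neg ((n + l : ℕ) : ℤ),
      ← Padic.norm_p_zpow, ← norm_mul, ← hsub]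
  have hd : d = 0 := by
    refine Int.eq_zero_of_abs_lt_dvd hdvd (abs_sub_lt_of_nonneg_of_lt ?_ ?_ ?_ ?_)
    · positivity
    · rw [pow_add]
      exact mul_lt_mul_of_pos_right (mod_cast hm) (pow_pos (mod_cast hp.pos) l)
    · positivity
    · rw [pow_add, mul_comm ((p : ℤ) ^ n)]
      exact mul_lt_mul_of_pos_right (mod_cast hk) (pow_pos (mod_cast hp.pos) n)
  rw [← sub_eq_zero, hsub, hd, Int.cast_zero, zero_mul]

theorem zero_mem_Ip : (0 : ℚ_[p]) ∈ Ip p := ⟨0, 0, by simp, by simp⟩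

theorem dist_le_one_iff_norm_le_one {x y : ℚ_[p]} (hx : ‖x‖ ≤ 1) : dist y x ≤ 1 ↔ ‖y‖ ≤ 1 := by
  rw [← Metric.mem_closedBall, ← mem_closedBall_zero_iff,
    IsUltrametricDist.closedBall_eq_of_mem (mem_closedBall_zero_iff.2 hx)]

theorem measure_closedBall_center {ν : Measure ℚ_[p]} [ν.IsAddLeftInvariant] (x : ℚ_[p]) (r : ℝ) :
    ν (Metric.closedBall x r) = ν (Metric.closedBall 0 r) := by
  rw [← measure_preimage_add ν x, preimage_add_closedBall, sub_self]

theorem exists_lt_norm_sub_natCast_le {y : ℚ_[p]} (hy : ‖y‖ ≤ 1) :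
    ∃ i < p, ‖y - (i : ℚ_[p])‖ ≤ (p : ℝ) ^ (-1 : ℤ) := by
  let z : ℤ_[p] := ⟨y, hy⟩
  obtain ⟨i, hi, hzi⟩ := PadicInt.exists_mem_range z
  rw [PadicInt.maximalIdeal_eq_span_p, ← pow_one (p : ℤ_[p]),
    ← PadicInt.norm_le_pow_iff_mem_span_pow, PadicInt.norm_def, PadicInt.coe_sub,
    PadicInt.coe_natCast, Nat.cast_one] at hzi
  exact ⟨i, hi, hzi⟩

theorem closedBall_zpow_eq_biUnion (n : ℤ) :
    Metric.closedBall (0 : ℚ_[p]) ((p : ℝ) ^ (-n)) =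
      ⋃ i ∈ Finset.range p,
        Metric.closedBall ((p : ℚ_[p]) ^ n * (i : ℚ_[p])) ((p : ℝ) ^ (-(n + 1))) := by
  have hp : p.Prime := Fact.out
  have hp0 : (p : ℚ_[p]) ≠ 0 := mod_cast hp.ne_zero
  have hpos : (0 : ℝ) < p := mod_cast hp.pos
  refine Set.Subset.antisymm (fun x hx => ?_) (Set.iUnion₂_subset fun i _ => ?_)
  · have hint : ‖(p : ℚ_[p]) ^ (-n) * x‖ ≤ 1 := by
      rw [norm_mul, Padic.norm_p_zpow, neg_neg]
      calc (p : ℝ) ^ n * ‖x‖ ≤ (p : ℝ) ^ n * (p : ℝ) ^ (-n) := by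
            gcongr
            simpa using hx
        _ = 1 := by rw [← zpow_add₀ hpos.ne', add_neg_cancel, zpow_zero]
    obtain ⟨i, hi, hxi⟩ := exists_lt_norm_sub_natCast_le hint
    refine Set.mem_biUnion (Finset.mem_coe.2 (Finset.mem_range.2 hi)) ?_
    rw [Metric.mem_closedBall, dist_eq_norm]
    calc ‖x - (p : ℚ_[p]) ^ n * i‖ = ‖(p : ℚ_[p]) ^ n * ((p : ℚ_[p]) ^ (-n) * x - i)‖ := by
          rw [mul_sub, ← mul_assoc, ← zpow_add₀ hp0, add_neg_cancel, zpow_zero, one_mul]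
      _ ≤ (p : ℝ) ^ (-n) * (p : ℝ) ^ (-1 : ℤ) := by
          rw [norm_mul, Padic.norm_p_zpow]
          gcongr
      _ = (p : ℝ) ^ (-(n + 1)) := by rw [← zpow_add₀ hpos.ne', neg_add]
  · have hmem : (p : ℚ_[p]) ^ n * (i : ℚ_[p]) ∈ Metric.closedBall 0 ((p : ℝ) ^ (-n)) := by
      rw [mem_closedBall_zero_iff, norm_mul, Padic.norm_p_zpow]
      exact mul_le_of_le_one_right (by positivity) (by simpa using Padic.norm_int_le_one (p := p) i)
    rw [IsUltrametricDist.closedBall_eq_of_mem hmem]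
    exact Metric.closedBall_subset_closedBall
      (zpow_le_zpow_right₀ (mod_cast hp.one_le) (by lia))

theorem pairwiseDisjoint_closedBall_zpow (n : ℤ) :
    (Finset.range p : Set ℕ).PairwiseDisjoint fun i =>
      Metric.closedBall ((p : ℚ_[p]) ^ n * (i : ℚ_[p])) ((p : ℝ) ^ (-(n + 1))) := by
  have hp : p.Prime := Fact.out
  have hpos : (0 : ℝ) < p := mod_cast hp.pos
  intro i hi k hk hik
  refine (IsUltrametricDist.closedBall_eq_or_disjoint _ _ _).resolve_left fun heq => hik ?_
  have hmem : (p : ℚ_[p]) ^ n * (i : ℚ_[p]) ∈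
      Metric.closedBall ((p : ℚ_[p]) ^ n * (k : ℚ_[p])) ((p : ℝ) ^ (-(n + 1))) :=
    heq ▸ Metric.mem_closedBall_self (by positivity)
  have hnorm : ‖(((i : ℤ) - k : ℤ) : ℚ_[p])‖ ≤ (p : ℝ) ^ (-((1 : ℕ) : ℤ)) := by
    rw [Metric.mem_closedBall, dist_eq_norm, ← mul_sub, norm_mul, Padic.norm_p_zpow, neg_add,
      zpow_add₀ hpos.ne'] at hmem
    simpa using le_of_mul_le_mul_left hmem (zpow_pos hpos _)
  rw [Padic.norm_int_le_pow_iff_dvd, pow_one] at hnorm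
  have hsub := Int.eq_zero_of_abs_lt_dvd hnorm (abs_sub_lt_of_nonneg_of_lt (by positivity)
    (mod_cast Finset.mem_range.1 hi) (by positivity) (mod_cast Finset.mem_range.1 hk))
  lia

theorem measure_closedBall_zpow_succ {ν : Measure ℚ_[p]} [ν.IsAddLeftInvariant] (n : ℤ) :
    ν (Metric.closedBall 0 ((p : ℝ) ^ (-n))) =
      p * ν (Metric.closedBall 0 ((p : ℝ) ^ (-(n + 1)))) := by
  rw [closedBall_zpow_eq_biUnion, measure_biUnion_finset (pairwiseDisjoint_closedBall_zpow n)
    fun _ _ => Metric.isClosed_closedBall.measurableSet]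
  simp only [measure_closedBall_center, Finset.sum_const, Finset.card_range, nsmul_eq_mul]

theorem measure_closedBall_zpow {ν : Measure ℚ_[p]} [ν.IsAddLeftInvariant]
    (hν : ν {x : ℚ_[p] | ‖x‖ ≤ 1} = 1) (n : ℤ) (x : ℚ_[p]) :
    ν (Metric.closedBall x ((p : ℝ) ^ (-n))) = (p : ENNReal) ^ (-n) := by
  have hp : p.Prime := Fact.out
  have hp0 : (p : ENNReal) ≠ 0 := mod_cast hp.ne_zero
  have hpt : (p : ENNReal) ≠ ⊤ := ENNReal.natCast_ne_top p
  rw [measure_closedBall_center]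
  induction n with
  | zero => simpa [Metric.closedBall] using hν
  | succ n ih =>
    rw [measure_closedBall_zpow_succ] at ih
    rw [neg_add, ENNReal.zpow_add hp0 hpt, ← ih, zpow_neg_one, mul_comm, ← mul_assoc,
      ENNReal.inv_mul_cancel hp0 hpt, one_mul, neg_add]
  | pred n ih =>
    rw [measure_closedBall_zpow_succ, sub_add_cancel, ih, neg_sub, sub_neg_eq_add, neg_neg,
      ENNReal.zpow_add hp0 hpt, zpow_one]

end Padic

theorem exists_prime_forall_le {S : Set Nat.Primes} (hS : S.Finite) :
    ∃ m : Nat.Primes, ∀ q ∈ S, (q : ℕ) ≤ m := by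
  obtain ⟨N, hN⟩ := (hS.image fun q : Nat.Primes => (q : ℕ)).bddAbove
  obtain ⟨r, hNr, hr⟩ := Nat.exists_infinite_primes N
  exact ⟨⟨r, hr⟩, fun q hq => (hN ⟨q, hq, rfl⟩).trans hNr⟩

theorem floor_two_zpow_mul_eq_of_le {j j' : ℤ} (hj : j ≤ j') {s t : ℝ}
    (h : ⌊(2 : ℝ) ^ j' * s⌋ = ⌊(2 : ℝ) ^ j' * t⌋) : ⌊(2 : ℝ) ^ j * s⌋ = ⌊(2 : ℝ) ^ j * t⌋ := by
  obtain ⟨n, rfl⟩ := Int.le.dest hj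
  have key (u : ℝ) : ⌊(2 : ℝ) ^ j * u⌋ = ⌊(2 : ℝ) ^ (j + n) * u⌋ / ((2 ^ n : ℕ) : ℤ) := by
    rw [← Int.floor_div_natCast, zpow_add₀ two_ne_zero, zpow_natCast]
    push_cast
    congr 1
    field_simp
  rw [key s, key t, h]

namespace Adele

theorem measurable_real : Measurable fun x : Adele => x.1.1 :=
  measurable_fst.comp measurable_subtype_coe

theorem measurable_padic (q : Nat.Primes) : Measurable fun x : Adele => x.1.2 q :=
  (measurable_pi_apply q).comp (measurable_snd.comp measurable_subtype_coe)

theorem measurable_of_components {β : Type*} [MeasurableSpace β] {f : β → Adele}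
    (hreal : Measurable fun y => (f y).1.1) (hpadic : ∀ q, Measurable fun y => (f y).1.2 q) :
    Measurable f :=
  (hreal.prodMk (measurable_pi_lambda (fun y => (f y).1.2) hpadic)).subtype_mk

theorem finite_not_integral (x : Adele) : {q | ¬ ‖x.1.2 q‖ ≤ 1}.Finite :=
  Filter.eventually_cofinite.1 x.2

/-- The adeles that are integral at every prime above `m`. -/
def integralAbove (m : Nat.Primes) : Set Adele :=
  {x | ∀ q : Nat.Primes, ¬ (q : ℕ) ≤ m → ‖x.1.2 q‖ ≤ 1}

/-- The cell of level `(j, e)` around the adele `x`: the product of the half-open dyadic interval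
of length `2^(-j)` around `x_∞` and of the closed balls of radius `q^(-e q)` around the `x_q`.
Up to a null set, the support of a shifted scaling function is such a cell. -/
def cell (j : ℤ) (e : Nat.Primes →₀ ℤ) (x : Adele) : Set Adele :=
  {y | ⌊(2 : ℝ) ^ j * y.1.1⌋ = ⌊(2 : ℝ) ^ j * x.1.1⌋ ∧
    ∀ q, dist (y.1.2 q) (x.1.2 q) ≤ ((q : ℕ) : ℝ) ^ (-e q)}

/-- The family of the cells of all levels. -/
def cells : Set (Set Adele) := {A | ∃ j e x, A = cell j e x}

variable {j j' : ℤ} {e e' : Nat.Primes →₀ ℤ} {x y : Adele}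

theorem mem_cell_self : x ∈ cell j e x :=
  ⟨rfl, fun q => by rw [dist_self]; positivity⟩

theorem cell_eq_of_mem (h : y ∈ cell j e x) : cell j e y = cell j e x := by
  ext z
  refine and_congr (by rw [h.1]) (forall_congr' fun q => ?_)
  simpa only [Metric.mem_closedBall] using
    Set.ext_iff.1 (IsUltrametricDist.closedBall_eq_of_mem (h.2 q)).symm (z.1.2 q)

theorem cell_eq_or_disjoint : cell j e x = cell j e y ∨ Disjoint (cell j e x) (cell j e y) := by
  refine or_iff_not_imp_right.2 fun h => ?_
  obtain ⟨z, hx, hy⟩ := Set.not_disjoint_iff.1 h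
  rw [← cell_eq_of_mem hx, cell_eq_of_mem hy]

theorem cell_subset_cell (hj : j ≤ j') (he : e ≤ e') : cell j' e' x ⊆ cell j e x :=
  fun _ hy => ⟨floor_two_zpow_mul_eq_of_le hj hy.1, fun q => (hy.2 q).trans <|
    zpow_le_zpow_right₀ (mod_cast q.2.one_le) (neg_le_neg (he q))⟩

theorem cell_inter_cell : cell j e x ∩ cell j' e' x = cell (max j j') (e ⊔ e') x := by
  refine Set.Subset.antisymm (fun y hy => ⟨?_, fun q => ?_⟩) (Set.subset_inter
    (cell_subset_cell (le_max_left j j') le_sup_left)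
    (cell_subset_cell (le_max_right j j') le_sup_right))
  · rcases max_choice j j' with h | h <;> rw [h]
    exacts [hy.1.1, hy.2.1]
  · rw [Finsupp.sup_apply]
    rcases max_choice (e q) (e' q) with h | h <;> rw [h]
    exacts [hy.1.2 q, hy.2.2 q]

theorem isPiSystem_cells : IsPiSystem cells := by
  rintro _ ⟨j, e, x, rfl⟩ _ ⟨j', e', x', rfl⟩ ⟨z, hz, hz'⟩
  exact ⟨_, _, z, by rw [← cell_eq_of_mem hz, ← cell_eq_of_mem hz', cell_inter_cell]⟩

theorem measurableSet_cell : MeasurableSet (cell j e x) := by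
  have hreal : MeasurableSet {y : Adele | ⌊(2 : ℝ) ^ j * y.1.1⌋ = ⌊(2 : ℝ) ^ j * x.1.1⌋} :=
    (Int.measurable_floor.comp (measurable_real.const_mul _)) (measurableSet_singleton _)
  have hpadic (q : Nat.Primes) :
      MeasurableSet {y : Adele | dist (y.1.2 q) (x.1.2 q) ≤ ((q : ℕ) : ℝ) ^ (-e q)} :=
    measurable_padic q Metric.isClosed_closedBall.measurableSet
  simpa only [cell, Set.ofPred_and, Set.ofPred_forall] using
    hreal.inter (MeasurableSet.iInter hpadic)

/-- The adele with finitely many nonzero finite components, all its components being rational. -/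
def ofRat (r : ℚ × (Nat.Primes →₀ ℚ)) : Adele :=
  ⟨(r.1, fun q => r.2 q), by
    filter_upwards [r.2.support.finite_toSet.compl_mem_cofinite] with q hq
    simp [Finsupp.notMem_support_iff.1 (mt Finset.mem_coe.2 hq)]⟩

theorem exists_ofRat_mem_cell (j : ℤ) (e : Nat.Primes →₀ ℤ) (x : Adele) :
    ∃ r, ofRat r ∈ cell j e x := by
  have hpos (q : Nat.Primes) : (0 : ℝ) < ((q : ℕ) : ℝ) ^ (-e q) :=
    zpow_pos (mod_cast q.2.pos) _
  choose r hr using fun q : Nat.Primes => Padic.rat_dense q (x.1.2 q) (hpos q)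
  let S : Finset Nat.Primes := e.support ∪ x.finite_not_integral.toFinset
  refine ⟨((2 : ℚ) ^ (-j) * ⌊(2 : ℝ) ^ j * x.1.1⌋, Finsupp.indicator S fun q _ => r q), ?_,
    fun q => ?_⟩
  · have hj : (2 : ℝ) ^ j ≠ 0 := zpow_ne_zero j two_ne_zero
    simp [ofRat, mul_inv_cancel_left₀ hj]
  · change dist ((Finsupp.indicator S (fun q _ => r q) q : ℚ) : ℚ_[(q : ℕ)]) _ ≤ _
    rw [dist_comm, dist_eq_norm, Finsupp.indicator_apply]
    split_ifs with hq
    · exact (hr q).le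
    · simp only [S, Finset.mem_union, Finsupp.mem_support_iff, Set.Finite.mem_toFinset,
        Set.mem_ofPred_eq, not_or, not_not] at hq
      simpa [hq.1] using hq.2

theorem countable_range_cell (j : ℤ) (e : Nat.Primes →₀ ℤ) : (Set.range (cell j e)).Countable := by
  refine (Set.countable_range fun r => cell j e (ofRat r)).mono ?_
  rintro _ ⟨x, rfl⟩
  obtain ⟨r, hr⟩ := exists_ofRat_mem_cell j e x
  exact ⟨r, cell_eq_of_mem hr⟩

theorem countable_cells : cells.Countable := by
  refine (Set.countable_iUnion fun j => Set.countable_iUnion (countable_range_cell j)).mono ?_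
  rintro _ ⟨j, e, x, rfl⟩
  exact Set.mem_iUnion₂.2 ⟨j, e, x, rfl⟩

theorem range_cell_subset_cells (j : ℤ) (e : Nat.Primes →₀ ℤ) : Set.range (cell j e) ⊆ cells := by
  rintro _ ⟨x, rfl⟩
  exact ⟨j, e, x, rfl⟩

theorem sUnion_range_cell (j : ℤ) (e : Nat.Primes →₀ ℤ) : ⋃₀ Set.range (cell j e) = Set.univ :=
  Set.eq_univ_of_forall fun x => ⟨_, ⟨x, rfl⟩, mem_cell_self⟩

theorem measurableSet_generateFrom_cells {W : Set Adele}
    (hW : ∀ x ∈ W, ∃ j e, cell j e x ⊆ W) :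
    MeasurableSet[MeasurableSpace.generateFrom cells] W := by
  have hunion : ⋃₀ {A ∈ cells | A ⊆ W} = W := by
    refine Set.Subset.antisymm (Set.sUnion_subset fun A hA => hA.2) fun x hx => ?_
    obtain ⟨j, e, h⟩ := hW x hx
    exact ⟨_, ⟨⟨j, e, x, rfl⟩, h⟩, mem_cell_self⟩
  rw [← hunion]
  exact MeasurableSet.sUnion (countable_cells.mono (Set.sep_subset _ _)) fun A hA =>
    MeasurableSpace.measurableSet_generateFrom hA.1

theorem exists_cell_subset_real {U : Set ℝ} (hU : IsOpen U) (hx : x.1.1 ∈ U) :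
    ∃ j e, cell j e x ⊆ {y | y.1.1 ∈ U} := by
  obtain ⟨ε, hε, hball⟩ := Metric.isOpen_iff.1 hU _ hx
  obtain ⟨n, hn⟩ := exists_pow_lt_of_lt_one hε (one_half_lt_one (α := ℝ))
  refine ⟨n, 0, fun y hy => hball ?_⟩
  have hfloor := Int.abs_sub_lt_one_of_floor_eq_floor hy.1
  rw [← mul_sub, abs_mul, zpow_natCast, abs_of_pos (by positivity), ← Real.dist_eq,
    ← lt_inv_mul_iff₀ (by positivity), mul_one, ← inv_pow, ← one_div] at hfloor
  exact hfloor.trans hn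

theorem exists_cell_subset_padic {q : Nat.Primes} {U : Set ℚ_[(q : ℕ)]} (hU : IsOpen U)
    (hx : x.1.2 q ∈ U) : ∃ j e, cell j e x ⊆ {y | y.1.2 q ∈ U} := by
  obtain ⟨ε, hε, hball⟩ := Metric.isOpen_iff.1 hU _ hx
  obtain ⟨n, hn⟩ := exists_pow_lt_of_lt_one hε
    (inv_lt_one_of_one_lt₀ (mod_cast q.2.one_lt : (1 : ℝ) < (q : ℕ)))
  refine ⟨0, Finsupp.single q n, fun y hy => hball ?_⟩
  have hdist := hy.2 q
  rw [Finsupp.single_eq_same, zpow_neg, zpow_natCast, ← inv_pow] at hdist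
  exact hdist.trans_lt hn

theorem generateFrom_cells :
    (inferInstance : MeasurableSpace Adele) = MeasurableSpace.generateFrom cells := by
  refine le_antisymm (fun A hA => ?_) (MeasurableSpace.generateFrom_le ?_)
  · have hreal : Measurable[MeasurableSpace.generateFrom cells] fun x : Adele => x.1.1 :=
      @measurable_of_isOpen _ _ _ _ _ (MeasurableSpace.generateFrom cells) _ fun U hU =>
        measurableSet_generateFrom_cells fun x hx => exists_cell_subset_real hU hx
    have hpadic (q : Nat.Primes) :
        Measurable[MeasurableSpace.generateFrom cells] fun x : Adele => x.1.2 q :=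
      @measurable_of_isOpen _ _ _ _ _ (MeasurableSpace.generateFrom cells) _ fun U hU =>
        measurableSet_generateFrom_cells fun x hx => exists_cell_subset_padic hU hx
    exact @measurable_of_components _ (MeasurableSpace.generateFrom cells) id hreal hpadic A hA
  · rintro _ ⟨j, e, x, rfl⟩
    exact measurableSet_cell

end Adele

/-- `μ` is the adelic Haar measure: the product of Lebesgue measure and of the Haar measures `μp q`
with `μp q (ℤ_q) = 1`, prescribed on the measurable boxes that are integral outside a finite set of
primes. -/
structure IsAdelicHaar (μp : ∀ q : Nat.Primes, Measure ℚ_[(q : ℕ)]) (μ : Measure Adele) : Prop where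
  haar : ∀ q, (μp q).IsAddHaarMeasure
  norm : ∀ q, μp q {x : ℚ_[(q : ℕ)] | ‖x‖ ≤ 1} = 1
  prod : ∀ E : Set ℝ, MeasurableSet E → ∀ S : Finset Nat.Primes,
    ∀ B : ∀ q : Nat.Primes, Set ℚ_[(q : ℕ)], (∀ q, MeasurableSet (B q)) →
    μ {x : Adele | x.1.1 ∈ E ∧ (∀ q ∈ S, x.1.2 q ∈ B q) ∧ ∀ q ∉ S, ‖x.1.2 q‖ ≤ 1}
      = volume E * ∏ q ∈ S, μp q (B q)

theorem setOf_floor_two_zpow_mul_eq (j k : ℤ) :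
    {t : ℝ | ⌊(2 : ℝ) ^ j * t⌋ = k} =
      Set.Ico ((2 : ℝ) ^ (-j) * k) ((2 : ℝ) ^ (-j) * (k + 1)) := by
  ext t
  rw [Set.mem_ofPred_eq, Int.floor_eq_iff, Set.mem_Ico, zpow_neg,
    inv_mul_le_iff₀ (by positivity), lt_inv_mul_iff₀ (by positivity)]

theorem volume_setOf_floor_two_zpow_mul_eq (j k : ℤ) :
    volume {t : ℝ | ⌊(2 : ℝ) ^ j * t⌋ = k} = (2 : ENNReal) ^ (-j) := by
  rw [setOf_floor_two_zpow_mul_eq, Real.volume_Ico, ← mul_sub, add_sub_cancel_left, mul_one,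
    ← Real.rpow_intCast, ← ENNReal.ofReal_rpow_of_pos two_pos, ENNReal.rpow_intCast,
    ENNReal.ofReal_ofNat]

namespace IsAdelicHaar

open Adele

variable {μp : ∀ q : Nat.Primes, Measure ℚ_[(q : ℕ)]} {μ : Measure Adele}
  {j : ℤ} {e : Nat.Primes →₀ ℤ} {x : Adele}

theorem ae_real_ne (h : IsAdelicHaar μp μ) (c : ℝ) : ∀ᵐ x : Adele ∂μ, x.1.1 ≠ c := by
  have hcover : {x : Adele | x.1.1 = c} ⊆ ⋃ S : Finset Nat.Primes,
      {x : Adele | x.1.1 ∈ ({c} : Set ℝ) ∧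
        (∀ q ∈ S, x.1.2 q ∈ (Set.univ : Set ℚ_[(q : ℕ)])) ∧ ∀ q ∉ S, ‖x.1.2 q‖ ≤ 1} := fun x hx =>
    Set.mem_iUnion.2 ⟨x.finite_not_integral.toFinset, hx, fun _ _ => trivial, fun q hq => by
      simpa using hq⟩
  simp only [ae_iff, not_not]
  refine measure_mono_null hcover (measure_iUnion_null fun S => ?_)
  rw [h.prod _ (measurableSet_singleton c) S _ fun _ => MeasurableSet.univ, Real.volume_singleton,
    zero_mul]

theorem measure_cell (h : IsAdelicHaar μp μ) :
    μ (cell j e x) = (2 : ENNReal) ^ (-j) * e.prod fun q n => ((q : ℕ) : ENNReal) ^ (-n) := by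
  let S : Finset Nat.Primes := e.support ∪ x.finite_not_integral.toFinset
  have hS (q : Nat.Primes) (hq : q ∉ S) : e q = 0 ∧ ‖x.1.2 q‖ ≤ 1 := by
    simpa [S, not_or] using hq
  have hbox : cell j e x = {y : Adele |
      y.1.1 ∈ {t : ℝ | ⌊(2 : ℝ) ^ j * t⌋ = ⌊(2 : ℝ) ^ j * x.1.1⌋} ∧
      (∀ q ∈ S, y.1.2 q ∈ Metric.closedBall (x.1.2 q) (((q : ℕ) : ℝ) ^ (-e q))) ∧
      ∀ q ∉ S, ‖y.1.2 q‖ ≤ 1} := by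
    ext y
    refine and_congr Iff.rfl ⟨fun hy => ⟨fun q _ => hy q, fun q hq => ?_⟩, fun hy q => ?_⟩
    · obtain ⟨he, hx⟩ := hS q hq
      simpa [he, dist_le_one_iff_norm_le_one hx] using hy q
    · by_cases hq : q ∈ S
      · exact hy.1 q hq
      · obtain ⟨he, hx⟩ := hS q hq
        simpa [he, dist_le_one_iff_norm_le_one hx] using hy.2 q hq
  have hfloor : MeasurableSet {t : ℝ | ⌊(2 : ℝ) ^ j * t⌋ = ⌊(2 : ℝ) ^ j * x.1.1⌋} :=
    (Int.measurable_floor.comp (measurable_const_mul _)) (measurableSet_singleton _)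
  have hball (q : Nat.Primes) :
      μp q (Metric.closedBall (x.1.2 q) (((q : ℕ) : ℝ) ^ (-e q))) = ((q : ℕ) : ENNReal) ^ (-e q) :=
    have := h.haar q
    measure_closedBall_zpow (h.norm q) _ _
  rw [hbox, h.prod _ hfloor S _ fun q => Metric.isClosed_closedBall.measurableSet,
    volume_setOf_floor_two_zpow_mul_eq, Finset.prod_congr rfl fun q _ => hball q,
    Finsupp.prod_of_support_subset e (s := S) Finset.subset_union_left _ fun _ _ => by simp]

theorem measure_cell_ne_top (h : IsAdelicHaar μp μ) : μ (cell j e x) ≠ ⊤ := by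
  rw [h.measure_cell]
  exact ENNReal.mul_ne_top (ENNReal.zpow_ne_top two_ne_zero ENNReal.ofNat_ne_top _) <|
    ENNReal.prod_ne_top fun q _ =>
      ENNReal.zpow_ne_top (mod_cast q.2.ne_zero) (ENNReal.natCast_ne_top _) _

theorem ext_of_cell (h : IsAdelicHaar μp μ) {ν : Measure Adele}
    (hν : ∀ j e x, μ (cell j e x) = ν (cell j e x)) : μ = ν := by
  refine Measure.ext_of_generateFrom_of_cover_subset generateFrom_cells isPiSystem_cells
    (range_cell_subset_cells 0 0) (countable_range_cell 0 0) (sUnion_range_cell 0 0) ?_ ?_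
  · rintro _ ⟨x, rfl⟩
    exact h.measure_cell_ne_top
  · rintro _ ⟨j, e, x, rfl⟩
    exact hν j e x

end IsAdelicHaar

theorem ae_eq_zero_of_setIntegral_eq_zero_of_generateFrom {α E : Type*} [mα : MeasurableSpace α]
    [NormedAddCommGroup E] [NormedSpace ℝ E] [CompleteSpace E] {μ : Measure α} {f : α → E}
    {C T : Set (Set α)} (hgen : mα = MeasurableSpace.generateFrom C) (hC : IsPiSystem C)
    (hTC : T ⊆ C) (hT : T.Countable) (hcover : ⋃₀ T = Set.univ)
    (hint : ∀ t ∈ T, IntegrableOn f t μ) (hzero : ∀ s ∈ C, ∫ x in s, f x ∂μ = 0) :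
    f =ᵐ[μ] 0 := by
  have hmeas (s : Set α) (hs : s ∈ C) : MeasurableSet s :=
    hgen ▸ MeasurableSpace.measurableSet_generateFrom hs
  have hlocal (t : Set α) (ht : t ∈ T) : f =ᵐ[μ.restrict t] 0 := by
    refine (hint t ht).ae_eq_of_withDensityᵥ_eq (integrable_zero α E _)
      (VectorMeasure.ext_of_generateFrom C (fun s hs => ?_) hgen hC ?_)
    · rw [withDensityᵥ_apply (hint t ht) (hmeas s hs), withDensityᵥ_zero, FunLike.coe_zero,
        Pi.zero_apply, Measure.restrict_restrict (hmeas s hs)]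
      rcases (s ∩ t).eq_empty_or_nonempty with hst | hst
      · rw [hst, setIntegral_empty]
      · exact hzero _ (hC s hs t (hTC ht) hst)
    · rw [withDensityᵥ_apply (hint t ht) MeasurableSet.univ, withDensityᵥ_zero,
        FunLike.coe_zero, Pi.zero_apply, setIntegral_univ]
      exact hzero t (hTC ht)
  rw [← Measure.restrict_univ (μ := μ), ← hcover, Set.sUnion_eq_biUnion]
  exact (ae_eq_restrict_biUnion_iff _ hT _ _).2 hlocal

theorem tprod_mul_indZ {c : Nat.Primes → ℂ} {S : Finset Nat.Primes} (hc : ∀ q ∉ S, c q = 1)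
    {v : ∀ q : Nat.Primes, ℚ_[(q : ℕ)]} (hv : ∀ᶠ q in Filter.cofinite, ‖v q‖ ≤ 1) :
    ∏' q : Nat.Primes, c q * indZ q (v q) = (∏ q ∈ S, c q) * if ∀ q, ‖v q‖ ≤ 1 then 1 else 0 := by
  let T : Finset Nat.Primes := (Filter.eventually_cofinite.1 hv).toFinset
  have hT (q : Nat.Primes) (hq : q ∉ T) : indZ q (v q) = 1 := if_pos (by simpa [T] using hq)
  rw [(multipliable_of_ne_finset_one hc).tprod_mul (multipliable_of_ne_finset_one hT),
    tprod_eq_prod hc]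
  congr 1
  split_ifs with hall
  · simp [indZ, hall]
  · push Not at hall
    obtain ⟨q, hq⟩ := hall
    rw [tprod_eq_prod hT]
    exact Finset.prod_eq_zero (i := q) (by simpa [T] using hq) (if_neg hq.not_ge)

namespace Adele

variable {j j' : ℤ} {e e' : Nat.Primes →₀ ℤ} {m : Nat.Primes} {x y : Adele}

theorem setIntegral_cell_eq_zero_of_le {μ : Measure Adele} {f : Adele → ℂ} (hj : j ≤ j')
    (he : e ≤ e') (hint : IntegrableOn f (cell j e x) μ)
    (hzero : ∀ y ∈ cell j e x, ∫ z in cell j' e' y, f z ∂μ = 0) :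
    ∫ z in cell j e x, f z ∂μ = 0 := by
  let C : Set (Set Adele) := cell j' e' '' cell j e x
  have : Countable C :=
    ((countable_range_cell j' e').mono (Set.image_subset_range _ _)).to_subtype
  have hunion : ⋃ A : C, (A : Set Adele) = cell j e x := by
    refine Set.Subset.antisymm (Set.iUnion_subset ?_) fun y hy =>
      Set.mem_iUnion.2 ⟨⟨_, y, hy, rfl⟩, mem_cell_self⟩
    rintro ⟨_, y, hy, rfl⟩
    exact (cell_subset_cell hj he).trans (cell_eq_of_mem hy).subset
  rw [← hunion] at hint ⊢
  rw [integral_iUnion _ _ hint]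
  · refine (tsum_congr ?_).trans tsum_zero
    rintro ⟨_, y, hy, rfl⟩
    exact hzero y hy
  · rintro ⟨_, y, -, rfl⟩
    exact measurableSet_cell
  · rintro ⟨_, y, _, rfl⟩ ⟨_, z, _, rfl⟩ hyz
    exact cell_eq_or_disjoint.resolve_left (Subtype.coe_ne_coe.2 hyz)

/-- The cell level at which the scaling functions of `V_j^{[m]}` live: `j` at the primes up to `m`
and `0` above. -/
def level (j : ℤ) (m : Nat.Primes) : Nat.Primes →₀ ℤ :=
  Finsupp.indicator (primesLE_finite m).toFinset fun _ _ => j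

theorem level_apply (q : Nat.Primes) : level j m q = if (q : ℕ) ≤ m then j else 0 := by
  simp [level, Finsupp.indicator_apply]

theorem level_zero : level 0 m = 0 := by
  ext q
  simp [level_apply]

theorem level_mono (hj : j ≤ j') : level j m ≤ level j' m := fun q => by
  rw [level_apply, level_apply]
  split_ifs
  exacts [hj, le_rfl]

theorem level_eq_zero {q : Nat.Primes} (hq : ¬ (q : ℕ) ≤ m) : level j m q = 0 := by
  rw [level_apply, if_neg hq]

theorem mem_integralAbove_of_mem_cell (hx : x ∈ integralAbove m)
    (he : ∀ q : Nat.Primes, ¬ (q : ℕ) ≤ m → e q = 0) (hy : y ∈ cell j e x) :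
    y ∈ integralAbove m := fun q hq => by
  simpa [he q hq, dist_le_one_iff_norm_le_one (hx q hq)] using hy.2 q

theorem exists_le_level (j : ℤ) (e : Nat.Primes →₀ ℤ) (x : Adele) :
    ∃ n m, j ≤ n ∧ e ≤ level n m ∧ cell j e x ⊆ integralAbove m := by
  obtain ⟨m, hm⟩ := exists_prime_forall_le (e.support.finite_toSet.union x.finite_not_integral)
  obtain ⟨n, hn⟩ := (insert 0 (insert j (e.support.image e))).exists_le
  simp only [Finset.forall_mem_insert, Finset.forall_mem_image] at hn
  obtain ⟨hn0, hnj, hne⟩ := hn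
  have he (q : Nat.Primes) (hq : ¬ (q : ℕ) ≤ m) : e q = 0 :=
    Finsupp.notMem_support_iff.1 fun hqe => hq (hm q (Or.inl hqe))
  refine ⟨n, m, hnj, fun q => ?_, fun y => mem_integralAbove_of_mem_cell (fun q hq => ?_) he⟩
  · rw [level_apply]
    split_ifs with hq
    · by_cases hqe : q ∈ e.support
      · exact hne hqe
      · rwa [Finsupp.notMem_support_iff.1 hqe]
    · exact (he q hq).le
  · by_contra hxq
    exact hq (hm q (Or.inr hxq))

/-- The support of the shifted scaling function `scalFn j m k a`, up to the endpoint of its real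
factor: it is one of the cells of level `(j, level j m)`. -/
def scalCell (j : ℤ) (m : Nat.Primes) (k : ℤ) (a : ∀ q : Nat.Primes, ℚ_[(q : ℕ)]) : Set Adele :=
  {x | ⌊(2 : ℝ) ^ j * x.1.1⌋ = k ∧
    ∀ q : Nat.Primes, ‖if (q : ℕ) ≤ m then ((q : ℕ) : ℚ_[(q : ℕ)]) ^ (-j) * x.1.2 q - a q
      else x.1.2 q‖ ≤ 1}

variable {k : ℤ} {a : ∀ q : Nat.Primes, ℚ_[(q : ℕ)]}

theorem mem_integralAbove_of_mem_scalCell (hx : x ∈ scalCell j m k a) : x ∈ integralAbove m :=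
  fun q hq => by simpa [hq] using hx.2 q

theorem scalCell_eq_cell (hx : x ∈ scalCell j m k a) : scalCell j m k a = cell j (level j m) x := by
  ext y
  refine and_congr (by rw [hx.1]) (forall_congr' fun q => ?_)
  have hxq := hx.2 q
  rw [level_apply]
  split_ifs at hxq ⊢ with hq
  · have hpos : (0 : ℝ) < (q : ℕ) := mod_cast q.2.pos
    rw [← dist_le_one_iff_norm_le_one (y := _ - _) hxq, dist_sub_right, dist_eq_norm, ← mul_sub,
      norm_mul, Padic.norm_p_zpow, neg_neg, dist_eq_norm, zpow_neg,
      ← le_inv_mul_iff₀ (zpow_pos hpos j), mul_one]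
  · rw [neg_zero, zpow_zero, dist_le_one_iff_norm_le_one hxq]

theorem scalCell_nonempty (j : ℤ) (m : Nat.Primes) (k : ℤ) (a : ∀ q : Nat.Primes, ℚ_[(q : ℕ)]) :
    (scalCell j m k a).Nonempty := by
  refine ⟨⟨((2 : ℝ) ^ (-j) * k, fun q => if (q : ℕ) ≤ m then (q : ℕ) ^ j * a q else 0), ?_⟩, ?_,
    fun q => ?_⟩
  · filter_upwards [(primesLE_finite m).compl_mem_cofinite] with q hq
    simp [show ¬ (q : ℕ) ≤ m from hq]
  · have hj : (2 : ℝ) ^ j ≠ 0 := zpow_ne_zero j two_ne_zero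
    simp [mul_inv_cancel_left₀ hj]
  · have hj : ((q : ℕ) : ℚ_[(q : ℕ)]) ^ j ≠ 0 := zpow_ne_zero j (mod_cast q.2.ne_zero)
    split_ifs with hq <;> simp [hq, inv_mul_cancel_left₀ hj]

theorem exists_mem_scalCell (j : ℤ) (hx : x ∈ integralAbove m) :
    ∃ k a, (∀ q : Nat.Primes, (q : ℕ) ≤ m → a q ∈ Ip q) ∧ x ∈ scalCell j m k a := by
  choose a ha hxa using fun q : Nat.Primes =>
    exists_mem_Ip_norm_sub_le_one (((q : ℕ) : ℚ_[(q : ℕ)]) ^ (-j) * x.1.2 q)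
  refine ⟨_, a, fun q _ => ha q, rfl, fun q => ?_⟩
  split_ifs with hq
  exacts [hxa q, hx q hq]

/-- The factor `2 ∏_{q ≤ m} q` by which the dilation `dilMap m` divides the Haar measure. -/
def dilConst (m : Nat.Primes) : NNReal :=
  2 * ∏ q ∈ (primesLE_finite m).toFinset, ((q : ℕ) : NNReal)

theorem dilConst_pos : 0 < dilConst m :=
  mul_pos two_pos <| Finset.prod_pos fun q _ => mod_cast q.2.pos

/-- The normalizing constant `2^{j/2} ∏_{q ≤ m} q^{j/2}` of the scaling functions. -/
def scalConst (j : ℤ) (m : Nat.Primes) : ℝ :=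
  (dilConst m : ℝ) ^ ((j : ℝ) / 2)

theorem scalConst_pos : 0 < scalConst j m :=
  Real.rpow_pos_of_pos dilConst_pos _

theorem scalConst_zero : scalConst 0 m = 1 := by simp [scalConst]

theorem scalConst_add_one : scalConst (j + 1) m = √(dilConst m) * scalConst j m := by
  rw [scalConst, scalConst, Real.sqrt_eq_rpow,
    ← Real.rpow_add (NNReal.coe_pos.2 dilConst_pos)]
  congr 1
  push_cast
  ring

theorem scalConst_eq_mul_prod :
    scalConst j m = (2 : ℝ) ^ ((j : ℝ) / 2) *
      ∏ q ∈ (primesLE_finite m).toFinset, ((q : ℕ) : ℝ) ^ ((j : ℝ) / 2) := by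
  rw [scalConst, dilConst, Real.finsetProd_rpow _ _ fun _ _ => Nat.cast_nonneg _,
    ← Real.mul_rpow zero_le_two (by positivity)]
  push_cast
  rfl

theorem scalFn_eq_mul_ite :
    scalFn j m k a x = scalConst j m * (indI ((2 : ℝ) ^ j * x.1.1 - k) *
      if ∀ q : Nat.Primes, ‖if (q : ℕ) ≤ m then ((q : ℕ) : ℚ_[(q : ℕ)]) ^ (-j) * x.1.2 q - a q
        else x.1.2 q‖ ≤ 1 then 1 else 0) := by
  let v (q : Nat.Primes) : ℚ_[(q : ℕ)] :=
    if (q : ℕ) ≤ m then ((q : ℕ) : ℚ_[(q : ℕ)]) ^ (-j) * x.1.2 q - a q else x.1.2 q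
  let c (q : Nat.Primes) : ℂ := if (q : ℕ) ≤ m then (((q : ℕ) : ℝ) ^ ((j : ℝ) / 2) : ℝ) else 1
  have hv : ∀ᶠ q in Filter.cofinite, ‖v q‖ ≤ 1 := by
    filter_upwards [x.2, (primesLE_finite m).compl_mem_cofinite] with q hxq hq
    simpa [v, show ¬ (q : ℕ) ≤ m from hq] using hxq
  have hc (q : Nat.Primes) (hq : q ∉ (primesLE_finite m).toFinset) : c q = 1 :=
    if_neg (by simpa using hq)
  have hprod : ∏ q ∈ (primesLE_finite m).toFinset, c q =
      ∏ q ∈ (primesLE_finite m).toFinset, ((((q : ℕ) : ℝ) ^ ((j : ℝ) / 2) : ℝ) : ℂ) :=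
    Finset.prod_congr rfl fun q hq => if_pos (by simpa using hq)
  have hfactor (q : Nat.Primes) :
      (if (q : ℕ) ≤ m then ((((q : ℕ) : ℝ) ^ ((j : ℝ) / 2) : ℝ) : ℂ) *
          indZ q (((q : ℕ) : ℚ_[(q : ℕ)]) ^ (-j) * x.1.2 q - a q)
        else indZ q (x.1.2 q)) = c q * indZ q (v q) := by
    simp only [c, v]
    split_ifs
    exacts [rfl, (one_mul _).symm]
  rw [scalFn, tprod_congr hfactor, tprod_mul_indZ hc hv, hprod, scalConst_eq_mul_prod]
  push_cast
  ring

theorem scalFn_eq_indicator_scalCell (hx : x.1.1 ≠ (2 : ℝ) ^ (-j) * (k + 1)) :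
    scalFn j m k a x = scalConst j m * (scalCell j m k a).indicator 1 x := by
  have hreal : (2 : ℝ) ^ j * x.1.1 - k ∈ Set.Icc (0 : ℝ) 1 ↔ ⌊(2 : ℝ) ^ j * x.1.1⌋ = k := by
    have hne : (2 : ℝ) ^ j * x.1.1 ≠ k + 1 := fun h => hx <| by
      rw [← h, zpow_neg, inv_mul_cancel_left₀ (zpow_ne_zero j two_ne_zero)]
    rw [Int.floor_eq_iff, Set.mem_Icc, sub_nonneg, sub_le_iff_le_add', hne.le_iff_lt]
  rw [scalFn_eq_mul_ite, indI, ite_zero_mul_ite_zero, one_mul, Set.indicator_apply, Pi.one_apply]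
  congr 2
  rw [hreal]
  rfl

end Adele

theorem VjAd_le {μ : Measure Adele} {j : ℤ} {W : Submodule ℂ (Lp ℂ 2 μ)}
    (hclosed : IsClosed (W : Set (Lp ℂ 2 μ))) (hW : ∀ m, Vjm μ j m ≤ W) : VjAd μ j ≤ W :=
  Submodule.topologicalClosure_minimal _ (iSup_le hW) hclosed

theorem Vjm_le_VjAd {μ : Measure Adele} {j : ℤ} (m : Nat.Primes) : Vjm μ j m ≤ VjAd μ j :=
  (le_iSup (Vjm μ j) m).trans (Submodule.le_topologicalClosure _)

namespace IsAdelicHaar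

open Adele
open scoped InnerProductSpace

variable {μp : ∀ q : Nat.Primes, Measure ℚ_[(q : ℕ)]} {μ : Measure Adele}
  {j j' : ℤ} {e : Nat.Primes →₀ ℤ} {m : Nat.Primes} {x y : Adele}
  {k : ℤ} {a : ∀ q : Nat.Primes, ℚ_[(q : ℕ)]}

/-- The indicator function of a cell, as a vector of `L²(𝔸, μ)`. -/
def cellVec (h : IsAdelicHaar μp μ) (j : ℤ) (e : Nat.Primes →₀ ℤ) (x : Adele) : Lp ℂ 2 μ :=
  indicatorConstLp 2 measurableSet_cell (h.measure_cell_ne_top (j := j) (e := e) (x := x)) 1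

theorem inner_cellVec (h : IsAdelicHaar μp μ) (f : Lp ℂ 2 μ) :
    ⟪h.cellVec j e x, f⟫_ℂ = ∫ z in cell j e x, f z ∂μ :=
  L2.inner_indicatorConstLp_one _ _ f

theorem inner_cellVec_cellVec (h : IsAdelicHaar μp μ) :
    ⟪h.cellVec j e x, h.cellVec j e y⟫_ℂ = μ.real (cell j e x ∩ cell j e y) :=
  L2.inner_indicatorConstLp_one_indicatorConstLp_one measurableSet_cell measurableSet_cell
    h.measure_cell_ne_top h.measure_cell_ne_top

theorem integrableOn_cell (h : IsAdelicHaar μp μ) (f : Lp ℂ 2 μ) :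
    IntegrableOn f (cell j e x) μ :=
  integrableOn_Lp_of_measure_ne_top f one_le_two h.measure_cell_ne_top

theorem scalFn_ae_eq_smul_cellVec (h : IsAdelicHaar μp μ) (hx : x ∈ scalCell j m k a) :
    scalFn j m k a =ᵐ[μ] ⇑((scalConst j m : ℂ) • h.cellVec j (level j m) x) := by
  have hindicator : h.cellVec j (level j m) x =ᵐ[μ] (scalCell j m k a).indicator 1 := by
    rw [scalCell_eq_cell hx]
    exact indicatorConstLp_coeFn
  have hendpoint : ∀ᵐ z : Adele ∂μ, z.1.1 ≠ (2 : ℝ) ^ (-j) * (k + 1) :=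
    h.ae_real_ne _
  filter_upwards [hindicator, hendpoint, Lp.coeFn_smul (scalConst j m : ℂ) (h.cellVec j _ x)]
    with z hz hz' hsmul
  rw [scalFn_eq_indicator_scalCell hz', hsmul, Pi.smul_apply, hz, smul_eq_mul]

theorem exists_Lp_ae_eq_scalFn (h : IsAdelicHaar μp μ) (j : ℤ) (m : Nat.Primes) (k : ℤ)
    (a : ∀ q : Nat.Primes, ℚ_[(q : ℕ)]) : ∃ g : Lp ℂ 2 μ, g =ᵐ[μ] scalFn j m k a := by
  obtain ⟨x, hx⟩ := scalCell_nonempty j m k a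
  exact ⟨_, (h.scalFn_ae_eq_smul_cellVec hx).symm⟩

theorem Vjm_eq (h : IsAdelicHaar μp μ) (j : ℤ) (m : Nat.Primes) :
    Vjm μ j m =
      (Submodule.span ℂ (h.cellVec j (level j m) '' integralAbove m)).topologicalClosure := by
  rw [Vjm]
  congr 1
  refine le_antisymm (Submodule.span_le.2 ?_) (Submodule.span_le.2 ?_)
  · rintro g ⟨k, a, -, hg⟩
    obtain ⟨x, hx⟩ := scalCell_nonempty j m k a
    rw [Lp.ext (hg.trans (h.scalFn_ae_eq_smul_cellVec hx))]
    exact Submodule.smul_mem _ _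
      (Submodule.subset_span ⟨x, mem_integralAbove_of_mem_scalCell hx, rfl⟩)
  · rintro _ ⟨x, hx, rfl⟩
    obtain ⟨k, a, ha, hxa⟩ := exists_mem_scalCell j hx
    have hconst : (scalConst j m : ℂ) ≠ 0 := ofReal_ne_zero.2 scalConst_pos.ne'
    refine (Submodule.smul_mem_iff _ hconst).1 (Submodule.subset_span ⟨k, a, ha, ?_⟩)
    exact (h.scalFn_ae_eq_smul_cellVec hxa).symm

theorem cellVec_mem_Vjm (h : IsAdelicHaar μp μ) (hx : x ∈ integralAbove m) :
    h.cellVec j (level j m) x ∈ Vjm μ j m := by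
  rw [h.Vjm_eq]
  exact Submodule.le_topologicalClosure _ (Submodule.subset_span ⟨x, hx, rfl⟩)

theorem Vjm_le (h : IsAdelicHaar μp μ) {W : Submodule ℂ (Lp ℂ 2 μ)}
    (hclosed : IsClosed (W : Set (Lp ℂ 2 μ)))
    (hW : ∀ x ∈ integralAbove m, h.cellVec j (level j m) x ∈ W) : Vjm μ j m ≤ W := by
  rw [h.Vjm_eq]
  refine Submodule.topologicalClosure_minimal _ (Submodule.span_le.2 ?_) hclosed
  rintro _ ⟨x, hx, rfl⟩
  exact hW x hx

theorem mem_orthogonal_Vjm_iff (h : IsAdelicHaar μp μ) {f : Lp ℂ 2 μ} :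
    f ∈ (Vjm μ j m)ᗮ ↔ ∀ x ∈ integralAbove m, ∫ z in cell j (level j m) x, f z ∂μ = 0 := by
  refine ⟨fun hf x hx => ?_, fun hf => ?_⟩
  · rw [← h.inner_cellVec]
    exact hf _ (h.cellVec_mem_Vjm hx)
  · have hle : Vjm μ j m ≤ (ℂ ∙ f)ᗮ := h.Vjm_le (Submodule.isClosed_orthogonal _) fun x hx => by
      rw [Submodule.mem_orthogonal_singleton_iff_inner_left, h.inner_cellVec, hf x hx]
    exact fun g hg => Submodule.mem_orthogonal_singleton_iff_inner_left.1 (hle hg)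

theorem Vjm_mono (h : IsAdelicHaar μp μ) (hj : j ≤ j') : Vjm μ j m ≤ Vjm μ j' m := by
  have : CompleteSpace (Vjm μ j' m) :=
    (Submodule.isClosed_topologicalClosure _).completeSpace_coe
  rw [← Submodule.orthogonal_orthogonal (Vjm μ j' m)]
  refine (Submodule.le_orthogonal_orthogonal _).trans (Submodule.orthogonal_le fun f hf => ?_)
  rw [h.mem_orthogonal_Vjm_iff] at hf ⊢
  exact fun x hx => setIntegral_cell_eq_zero_of_le hj (level_mono hj) (h.integrableOn_cell f)
    fun y hy => hf y (mem_integralAbove_of_mem_cell hx (fun _ => level_eq_zero) hy)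

theorem VjAd_mono (h : IsAdelicHaar μp μ) : Monotone (VjAd μ) := fun _ _ hj =>
  Submodule.topologicalClosure_mono (iSup_mono fun _ => h.Vjm_mono hj)

theorem eq_zero_of_setIntegral_cell_eq_zero (h : IsAdelicHaar μp μ) {f : Lp ℂ 2 μ}
    (hf : ∀ j e x, ∫ z in cell j e x, f z ∂μ = 0) : f = 0 := by
  rw [Lp.eq_zero_iff_ae_eq_zero]
  refine ae_eq_zero_of_setIntegral_eq_zero_of_generateFrom generateFrom_cells isPiSystem_cells
    (range_cell_subset_cells 0 0) (countable_range_cell 0 0) (sUnion_range_cell 0 0) ?_ ?_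
  · rintro _ ⟨x, rfl⟩
    exact h.integrableOn_cell f
  · rintro _ ⟨j, e, x, rfl⟩
    exact hf j e x

theorem iSup_orthogonal_VjAd (h : IsAdelicHaar μp μ) : (⨆ j, VjAd μ j)ᗮ = ⊥ := by
  refine (Submodule.eq_bot_iff _).2 fun f hf => h.eq_zero_of_setIntegral_cell_eq_zero
    fun j e x => ?_
  obtain ⟨n, m, hjn, hen, hcell⟩ := exists_le_level j e x
  have hfn : f ∈ (Vjm μ n m)ᗮ :=
    Submodule.orthogonal_le ((Vjm_le_VjAd m).trans (le_iSup (VjAd μ) n)) hf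
  exact setIntegral_cell_eq_zero_of_le hjn hen (h.integrableOn_cell f) fun y hy =>
    h.mem_orthogonal_Vjm_iff.1 hfn y (hcell hy)

theorem dense_iUnion_VjAd (h : IsAdelicHaar μp μ) :
    Dense (⋃ j, (VjAd μ j : Set (Lp ℂ 2 μ))) := by
  rw [← Submodule.coe_iSup_of_directed _ h.VjAd_mono.directed_le,
    Submodule.dense_iff_topologicalClosure_eq_top, Submodule.topologicalClosure_eq_top_iff]
  exact h.iSup_orthogonal_VjAd

end IsAdelicHaar

theorem exists_pairwise_lt_norm_sub {p : ℕ} [Fact p.Prime] (r : ℝ) :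
    ∃ c : ℕ → ℚ_[p], Pairwise fun i k => r < ‖c i - c k‖ := by
  have hp : 1 < (p : ℝ) := mod_cast (Fact.out : p.Prime).one_lt
  obtain ⟨n, hn⟩ := pow_unbounded_of_one_lt r hp
  have hnorm (i : ℕ) : ‖(p : ℚ_[p]) ^ (-((n + i : ℕ) : ℤ))‖ = (p : ℝ) ^ (n + i) := by
    rw [Padic.norm_p_zpow, neg_neg, zpow_natCast]
  refine ⟨fun i => (p : ℚ_[p]) ^ (-((n + i : ℕ) : ℤ)), fun i k hik => ?_⟩
  have hne : (p : ℝ) ^ (n + i) ≠ (p : ℝ) ^ (n + k) := fun h =>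
    hik (add_left_cancel (pow_right_injective₀ (by positivity) hp.ne' h))
  have hsub : ‖(p : ℚ_[p]) ^ (-((n + i : ℕ) : ℤ)) - (p : ℚ_[p]) ^ (-((n + k : ℕ) : ℤ))‖ =
      max ((p : ℝ) ^ (n + i)) ((p : ℝ) ^ (n + k)) := by
    rw [sub_eq_add_neg, IsUltrametricDist.norm_add_eq_max_of_norm_ne_norm, norm_neg, hnorm, hnorm]
    rwa [norm_neg, hnorm, hnorm]
  refine lt_of_lt_of_eq (lt_max_iff.2 ?_) hsub.symm
  exact Or.inl (hn.trans_le (pow_le_pow_right₀ hp.le (Nat.le_add_right n i)))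

theorem eq_zero_of_inner_eq_of_pairwise_orthogonal {𝕜 E ι : Type*} [RCLike 𝕜]
    [NormedAddCommGroup E] [InnerProductSpace 𝕜 E] [Infinite ι] {v : ι → E} {f : E} {r : ℝ} {c : 𝕜}
    (hv : Pairwise fun i k => inner 𝕜 (v i) (v k) = 0) (hr : ∀ i, ‖v i‖ = r)
    (hc : ∀ i, inner 𝕜 (v i) f = c) : c = 0 := by
  rcases eq_or_ne r 0 with rfl | hr0
  · obtain ⟨i⟩ := ‹Infinite ι›.nonempty
    rw [← hc i, norm_eq_zero.1 (hr i), inner_zero_left]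
  have horth : Orthonormal 𝕜 fun i => ((r⁻¹ : ℝ) : 𝕜) • v i := by
    refine ⟨fun i => ?_, fun i k hik => ?_⟩
    · rw [norm_smul, hr, RCLike.norm_ofReal, abs_of_nonneg (inv_nonneg.2 (hr i ▸ norm_nonneg _)),
        inv_mul_cancel₀ hr0]
    · beta_reduce
      rw [inner_smul_left, inner_smul_right, hv hik, mul_zero, mul_zero]
  have hsum := horth.inner_products_summable f
  simpa [inner_smul_left, hc, summable_const_iff, hr0] using hsum

namespace Adele

variable {j : ℤ} {e : Nat.Primes →₀ ℤ} {x : Adele} {q : Nat.Primes} {c : ℚ_[(q : ℕ)]}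

/-- The translation of the `q`-adic component of an adele by `c`. -/
def translate (q : Nat.Primes) (c : ℚ_[(q : ℕ)]) (x : Adele) : Adele :=
  ⟨(x.1.1, Function.update x.1.2 q (x.1.2 q + c)), by
    filter_upwards [x.2, (Set.finite_singleton q).compl_mem_cofinite] with r hr hrq
    rwa [Function.update_of_ne hrq]⟩

theorem measurable_translate : Measurable (translate q c) := by
  refine measurable_of_components measurable_real fun r => ?_
  rcases eq_or_ne r q with rfl | hrq
  · simpa [translate] using (measurable_padic r).add_const c
  · simpa [translate, hrq] using measurable_padic r

theorem preimage_translate_cell :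
    translate q c ⁻¹' cell j e x = cell j e (translate q (-c) x) := by
  ext y
  refine and_congr Iff.rfl (forall_congr' fun r => ?_)
  rcases eq_or_ne r q with rfl | hrq
  · simp [translate, dist_eq_norm, sub_eq_add_neg, add_assoc]
  · simp [translate, hrq]

theorem translate_mem_cell_self (hc : ‖c‖ ≤ ((q : ℕ) : ℝ) ^ (-e q)) :
    translate q c x ∈ cell j e x := by
  refine ⟨rfl, fun r => ?_⟩
  rcases eq_or_ne r q with rfl | hrq
  · simpa [translate] using hc
  · simpa [translate, hrq] using (mem_cell_self (j := j) (e := e) (x := x)).2 r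

theorem disjoint_cell_translate {d : ℚ_[(q : ℕ)]} (hcd : ((q : ℕ) : ℝ) ^ (-e q) < ‖c - d‖) :
    Disjoint (cell j e (translate q (-c) x)) (cell j e (translate q (-d) x)) := by
  refine cell_eq_or_disjoint.resolve_left fun heq => hcd.not_ge ?_
  have hmem : translate q (-c) x ∈ cell j e (translate q (-d) x) := heq ▸ mem_cell_self
  simpa [translate, dist_eq_norm, neg_add_eq_sub, norm_sub_rev d] using hmem.2 q

end Adele

namespace IsAdelicHaar

open Adele
open scoped InnerProductSpace

variable {μp : ∀ q : Nat.Primes, Measure ℚ_[(q : ℕ)]} {μ : Measure Adele}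
  {j : ℤ} {e : Nat.Primes →₀ ℤ} {m q : Nat.Primes} {x y : Adele} {c : ℚ_[(q : ℕ)]}

theorem measurePreserving_translate (h : IsAdelicHaar μp μ) (q : Nat.Primes) (c : ℚ_[(q : ℕ)]) :
    MeasurePreserving (translate q c) μ μ := by
  refine ⟨measurable_translate, (h.ext_of_cell fun j e x => ?_).symm⟩
  rw [Measure.map_apply measurable_translate measurableSet_cell, preimage_translate_cell,
    h.measure_cell, h.measure_cell]

/-- The isometry `f ↦ f ∘ translate q c` of `L²(𝔸, μ)`. -/
def translateL2 (h : IsAdelicHaar μp μ) (q : Nat.Primes) (c : ℚ_[(q : ℕ)]) :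
    Lp ℂ 2 μ →ₗᵢ[ℂ] Lp ℂ 2 μ :=
  Lp.compMeasurePreservingₗᵢ ℂ (translate q c) (h.measurePreserving_translate q c)

theorem cellVec_congr (h : IsAdelicHaar μp μ) (hxy : cell j e x = cell j e y) :
    h.cellVec j e x = h.cellVec j e y := by
  simp only [cellVec, hxy]

theorem translateL2_cellVec (h : IsAdelicHaar μp μ) :
    h.translateL2 q c (h.cellVec j e x) = h.cellVec j e (translate q (-c) x) := by
  simp only [cellVec, ← preimage_translate_cell]
  exact Lp.indicatorConstLp_compMeasurePreserving _ _ _ _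

theorem translateL2_eq_self_of_mem_Vjm (h : IsAdelicHaar μp μ) {f : Lp ℂ 2 μ}
    (hf : f ∈ Vjm μ j m) (hq : (q : ℕ) ≤ m) (hc : ‖c‖ ≤ ((q : ℕ) : ℝ) ^ (-j)) :
    h.translateL2 q c f = f := by
  have hle : Vjm μ j m ≤ LinearMap.eqLocus (h.translateL2 q c).toLinearMap LinearMap.id :=
    h.Vjm_le (isClosed_eq (h.translateL2 q c).continuous continuous_id) fun x _ =>
      h.translateL2_cellVec.trans <| h.cellVec_congr <| cell_eq_of_mem <|
        translate_mem_cell_self (by rwa [norm_neg, level_apply, if_pos hq])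
  exact hle hf

theorem translateL2_eq_self_of_mem_iInf_VjAd (h : IsAdelicHaar μp μ)
    (hq : ∀ m : Nat.Primes, (q : ℕ) ≤ m) (c : ℚ_[(q : ℕ)]) {f : Lp ℂ 2 μ}
    (hf : f ∈ ⨅ j, VjAd μ j) : h.translateL2 q c f = f := by
  obtain ⟨n, hn⟩ := pow_unbounded_of_one_lt ‖c‖ (mod_cast q.2.one_lt : (1 : ℝ) < (q : ℕ))
  have hle : VjAd μ (-n) ≤ LinearMap.eqLocus (h.translateL2 q c).toLinearMap LinearMap.id :=
    VjAd_le (isClosed_eq (h.translateL2 q c).continuous continuous_id) fun m g hg =>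
      h.translateL2_eq_self_of_mem_Vjm hg (hq m) (by rw [neg_neg, zpow_natCast]; exact hn.le)
  exact hle ((Submodule.mem_iInf _).1 hf _)

theorem iInf_VjAd (h : IsAdelicHaar μp μ) : ⨅ j, VjAd μ j = ⊥ := by
  refine (Submodule.eq_bot_iff _).2 fun f hf => h.eq_zero_of_setIntegral_cell_eq_zero
    fun j e x => ?_
  obtain ⟨q, hq⟩ : ∃ q : Nat.Primes, ∀ m : Nat.Primes, (q : ℕ) ≤ m :=
    ⟨⟨2, Nat.prime_two⟩, fun m => m.2.two_le⟩
  obtain ⟨c, hc⟩ := exists_pairwise_lt_norm_sub (p := q) (((q : ℕ) : ℝ) ^ (-e q))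
  rw [← h.inner_cellVec]
  refine eq_zero_of_inner_eq_of_pairwise_orthogonal
    (v := fun i => h.translateL2 q (c i) (h.cellVec j e x)) (f := f) (fun i k hik => ?_)
    (fun i => (h.translateL2 q (c i)).norm_map _) fun i => ?_
  · beta_reduce
    rw [h.translateL2_cellVec, h.translateL2_cellVec, h.inner_cellVec_cellVec,
      (disjoint_cell_translate (hc hik)).inter_eq, measureReal_empty, ofReal_zero]
  · nth_rw 1 [← h.translateL2_eq_self_of_mem_iInf_VjAd hq (c i) hf]
    exact (h.translateL2 q (c i)).inner_map_map _ _

end IsAdelicHaar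

theorem quasiMeasurePreserving_of_measurePreserving_smul {α : Type*} [MeasurableSpace α]
    {μ : Measure α} {T : α → α} {C : NNReal} (hT : MeasurePreserving T (C • μ) μ) (hC : C ≠ 0) :
    Measure.QuasiMeasurePreserving T μ μ :=
  hT.quasiMeasurePreserving.mono_left (Measure.absolutelyContinuous_smul (ENNReal.coe_ne_zero.2 hC))

section WeightedComposition

variable {α E : Type*} (𝕜 : Type*) [MeasurableSpace α] {μ : Measure α} [RCLike 𝕜]
  [NormedAddCommGroup E] [NormedSpace 𝕜 E] {T : α → α} {C : NNReal}

theorem memLp_sqrt_smul_comp (hT : MeasurePreserving T (C • μ) μ) (hC : C ≠ 0) {f : α → E}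
    (hf : MemLp f 2 μ) : MemLp (fun x => ((√C : ℝ) : 𝕜) • f (T x)) 2 μ := by
  have hcomp : MemLp (fun x => f (T x)) 2 (C⁻¹ • C • μ) :=
    (hf.comp_measurePreserving hT).smul_measure ENNReal.coe_ne_top
  rw [inv_smul_smul₀ hC] at hcomp
  exact hcomp.const_smul _

theorem eLpNorm_sqrt_smul_comp (hT : MeasurePreserving T (C • μ) μ) {f : α → E}
    (hf : AEStronglyMeasurable f μ) :
    eLpNorm (fun x => ((√C : ℝ) : 𝕜) • f (T x)) 2 μ = eLpNorm f 2 μ := by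
  have hsqrt : ‖((√C : ℝ) : 𝕜)‖ₑ = (C ^ (2 : ENNReal).toReal⁻¹ : NNReal) := by
    rw [← ofReal_norm, RCLike.norm_ofReal, abs_of_nonneg (Real.sqrt_nonneg _), ← Real.coe_sqrt,
      ENNReal.ofReal_coe_nnreal, NNReal.sqrt_eq_rpow, ENNReal.toReal_ofNat, one_div]
  calc eLpNorm (fun x => ((√C : ℝ) : 𝕜) • f (T x)) 2 μ
      = ‖((√C : ℝ) : 𝕜)‖ₑ * eLpNorm (f ∘ T) 2 μ := eLpNorm_const_smul ((√C : ℝ) : 𝕜) (f ∘ T) 2 μ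
    _ = eLpNorm (f ∘ T) 2 (C • μ) := by
        rw [hsqrt, eLpNorm_smul_measure_of_ne_top' ENNReal.ofNat_ne_top, ENNReal.smul_def,
          smul_eq_mul]
    _ = eLpNorm f 2 μ := eLpNorm_comp_measurePreserving hf hT

/-- The isometry `f ↦ √C • f ∘ T` of `L²(μ)`, for a map `T` that divides the measure `μ` by
`C`. -/
def sqrtSMulCompL2 (hT : MeasurePreserving T (C • μ) μ) (hC : C ≠ 0) :
    Lp E 2 μ →ₗᵢ[𝕜] Lp E 2 μ where
  toFun f := (memLp_sqrt_smul_comp 𝕜 hT hC (Lp.memLp f)).toLp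
  map_add' f g := by
    rw [← MemLp.toLp_add]
    refine (MemLp.toLp_eq_toLp_iff _ _).2 ?_
    filter_upwards [(quasiMeasurePreserving_of_measurePreserving_smul hT hC).ae
      (Lp.coeFn_add f g)] with x hx
    rw [hx, Pi.add_apply, smul_add]
    rfl
  map_smul' c f := by
    rw [RingHom.id_apply, ← MemLp.toLp_const_smul]
    refine (MemLp.toLp_eq_toLp_iff _ _).2 ?_
    filter_upwards [(quasiMeasurePreserving_of_measurePreserving_smul hT hC).ae
      (Lp.coeFn_smul c f)] with x hx
    rw [hx, Pi.smul_apply, smul_comm]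
    rfl
  norm_map' f := by
    change ‖(memLp_sqrt_smul_comp 𝕜 hT hC (Lp.memLp f)).toLp‖ = ‖f‖
    rw [Lp.norm_toLp, eLpNorm_sqrt_smul_comp 𝕜 hT (Lp.aestronglyMeasurable f), Lp.norm_def]

theorem coeFn_sqrtSMulCompL2 (hT : MeasurePreserving T (C • μ) μ) (hC : C ≠ 0) (f : Lp E 2 μ) :
    sqrtSMulCompL2 𝕜 hT hC f =ᵐ[μ] fun x => ((√C : ℝ) : 𝕜) • f (T x) :=
  (memLp_sqrt_smul_comp 𝕜 hT hC (Lp.memLp f)).coeFn_toLp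

end WeightedComposition

theorem map_mem_topologicalClosure_map_iff {𝕜 E F : Type*} [NormedField 𝕜]
    [NormedAddCommGroup E] [NormedSpace 𝕜 E] [NormedAddCommGroup F] [NormedSpace 𝕜 F]
    (T : E →ₗᵢ[𝕜] F) {W : Submodule 𝕜 E} {f : E} :
    T f ∈ (W.map T.toLinearMap).topologicalClosure ↔ f ∈ W.topologicalClosure := by
  rw [← SetLike.mem_coe, ← SetLike.mem_coe (p := W.topologicalClosure),
    Submodule.topologicalClosure_coe, Submodule.topologicalClosure_coe,
    T.isometry.isEmbedding.isInducing.closure_eq_preimage_closure_image]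
  rfl

/-- The vectors of `L²(𝔸, μ)` that generate `V_j^{[m]}`. -/
def scalVecs (μ : Measure Adele) (j : ℤ) (m : Nat.Primes) : Set (Lp ℂ 2 μ) :=
  {g | ∃ (k : ℤ) (a : ∀ q : Nat.Primes, ℚ_[(q : ℕ)]),
    (∀ q : Nat.Primes, (q : ℕ) ≤ m → a q ∈ Ip q) ∧ g =ᵐ[μ] scalFn j m k a}

theorem Vjm_eq_closure_span_scalVecs (μ : Measure Adele) (j : ℤ) (m : Nat.Primes) :
    Vjm μ j m = (Submodule.span ℂ (scalVecs μ j m)).topologicalClosure := rfl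

namespace Adele

variable {j k : ℤ} {e : Nat.Primes →₀ ℤ} {m : Nat.Primes} {x : Adele}
  {a : ∀ q : Nat.Primes, ℚ_[(q : ℕ)]}

theorem measurable_dilMap : Measurable (dilMap m) := by
  refine measurable_of_components (measurable_real.const_mul 2) fun q => ?_
  by_cases hq : (q : ℕ) ≤ m
  · simpa [dilMap, hq] using (measurable_padic q).div_const _
  · simpa [dilMap, hq] using measurable_padic q

theorem dilMap_surjective : Function.Surjective (dilMap m) := by
  refine fun x => ⟨⟨(x.1.1 / 2, fun q => if (q : ℕ) ≤ m then x.1.2 q * (q : ℕ) else x.1.2 q), ?_⟩,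
    Subtype.ext (Prod.ext ?_ (funext fun q => ?_))⟩
  · filter_upwards [x.2, (primesLE_finite m).compl_mem_cofinite] with q hxq hq
    simpa [show ¬ (q : ℕ) ≤ m from hq] using hxq
  · simp [dilMap, mul_div_cancel₀]
  · have hq0 : ((q : ℕ) : ℚ_[(q : ℕ)]) ≠ 0 := mod_cast q.2.ne_zero
    simp only [dilMap]
    split_ifs
    exacts [mul_div_cancel_right₀ _ hq0, rfl]

theorem two_zpow_mul_dilMap_real : (2 : ℝ) ^ j * (dilMap m x).1.1 = (2 : ℝ) ^ (j + 1) * x.1.1 := by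
  rw [zpow_add_one₀ two_ne_zero, mul_assoc]
  rfl

theorem preimage_dilMap_cell :
    dilMap m ⁻¹' cell j e (dilMap m x) = cell (j + 1) (e + level 1 m) x := by
  ext y
  refine and_congr (by simp only [two_zpow_mul_dilMap_real]) (forall_congr' fun q => ?_)
  have hq0 : (0 : ℝ) < (q : ℕ) := mod_cast q.2.pos
  rw [Finsupp.add_apply, level_apply]
  simp only [dilMap]
  split_ifs
  · rw [dist_eq_norm, ← sub_div, norm_div, Padic.norm_p, div_inv_eq_mul, ← le_div_iff₀ hq0,
      neg_add, zpow_add₀ hq0.ne', zpow_neg_one, ← div_eq_mul_inv, dist_eq_norm]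
  · rw [add_zero]

theorem scalFn_add_one :
    scalFn (j + 1) m k a x = ((√(dilConst m) : ℝ) : ℂ) * scalFn j m k a (dilMap m x) := by
  have hpadic (q : Nat.Primes) (z : ℚ_[(q : ℕ)]) :
      ((q : ℕ) : ℚ_[(q : ℕ)]) ^ (-j) * (z / (q : ℕ)) =
        ((q : ℕ) : ℚ_[(q : ℕ)]) ^ (-(j + 1)) * z := by
    rw [neg_add, zpow_add₀ (mod_cast q.2.ne_zero), zpow_neg_one]
    ring
  rw [scalFn_eq_mul_ite, scalFn_eq_mul_ite, scalConst_add_one, two_zpow_mul_dilMap_real,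
    ofReal_mul, mul_assoc]
  congr! 6 with q
  simp only [dilMap]
  split_ifs
  · rw [hpadic q (x.1.2 q)]
  · rfl

end Adele

namespace IsAdelicHaar

open Adele

variable {μp : ∀ q : Nat.Primes, Measure ℚ_[(q : ℕ)]} {μ : Measure Adele}
  {j : ℤ} {e : Nat.Primes →₀ ℤ} {m : Nat.Primes} {x : Adele}
  {k : ℤ} {a : ∀ q : Nat.Primes, ℚ_[(q : ℕ)]}

theorem dilConst_mul_measure_cell (h : IsAdelicHaar μp μ) (y : Adele) :
    dilConst m * μ (cell (j + 1) (e + level 1 m) y) = μ (cell j e x) := by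
  have htwo : (2 : ENNReal) * 2 ^ (-(j + 1)) = 2 ^ (-j) := by
    nth_rw 1 [← zpow_one (2 : ENNReal)]
    rw [← ENNReal.zpow_add two_ne_zero ENNReal.ofNat_ne_top]
    congr 1
    ring
  have hprod : (∏ q ∈ (primesLE_finite m).toFinset, ((q : ℕ) : ENNReal)) *
      (level 1 m).prod (fun q n => ((q : ℕ) : ENNReal) ^ (-n)) = 1 := by
    rw [level, Finsupp.prod_indicator_index _ fun _ _ => by simp, ← Finset.prod_mul_distrib]
    refine Finset.prod_eq_one fun q _ => ?_
    rw [zpow_neg_one]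
    exact ENNReal.mul_inv_cancel (mod_cast q.2.ne_zero) (ENNReal.natCast_ne_top _)
  have hadd := Finsupp.prod_add_index' (f := e) (g := level 1 m)
    (h := fun (q : Nat.Primes) (n : ℤ) => ((q : ℕ) : ENNReal) ^ (-n)) (fun _ => by simp)
    fun q _ _ => by
      rw [neg_add, ENNReal.zpow_add (mod_cast q.2.ne_zero) (ENNReal.natCast_ne_top _)]
  rw [h.measure_cell, h.measure_cell, ← htwo, hadd, dilConst]
  push_cast
  rw [mul_mul_mul_comm, mul_left_comm (∏ _ ∈ _, _), hprod, mul_one]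

theorem measurePreserving_dilMap (h : IsAdelicHaar μp μ) (m : Nat.Primes) :
    MeasurePreserving (dilMap m) (dilConst m • μ) μ := by
  refine ⟨measurable_dilMap, (h.ext_of_cell fun j e x => ?_).symm⟩
  obtain ⟨x, rfl⟩ := dilMap_surjective (m := m) x
  rw [Measure.map_apply measurable_dilMap measurableSet_cell, preimage_dilMap_cell,
    ← h.dilConst_mul_measure_cell x]
  rfl

/-- The dilation operator `D_m` of `L²(𝔸, μ)`. -/
def dilL2 (h : IsAdelicHaar μp μ) (m : Nat.Primes) : Lp ℂ 2 μ →ₗᵢ[ℂ] Lp ℂ 2 μ :=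
  sqrtSMulCompL2 ℂ (h.measurePreserving_dilMap m) dilConst_pos.ne'

theorem coeFn_dilL2 (h : IsAdelicHaar μp μ) (f : Lp ℂ 2 μ) :
    h.dilL2 m f =ᵐ[μ] fun x => ((√(dilConst m) : ℝ) : ℂ) * f (dilMap m x) :=
  coeFn_sqrtSMulCompL2 ℂ (h.measurePreserving_dilMap m) dilConst_pos.ne' f

theorem dilL2_ae_eq_scalFn (h : IsAdelicHaar μp μ) {f : Lp ℂ 2 μ} (hf : f =ᵐ[μ] scalFn j m k a) :
    h.dilL2 m f =ᵐ[μ] scalFn (j + 1) m k a := by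
  have hqmp : Measure.QuasiMeasurePreserving (dilMap m) μ μ :=
    quasiMeasurePreserving_of_measurePreserving_smul (h.measurePreserving_dilMap m)
      dilConst_pos.ne'
  filter_upwards [h.coeFn_dilL2 f, hqmp.ae hf] with x hx hfx
  rw [hx, hfx, scalFn_add_one]

theorem image_dilL2_scalVecs (h : IsAdelicHaar μp μ) :
    h.dilL2 m '' scalVecs μ j m = scalVecs μ (j + 1) m := by
  refine Set.Subset.antisymm ?_ ?_
  · rintro _ ⟨f, ⟨k, a, ha, hf⟩, rfl⟩
    exact ⟨k, a, ha, h.dilL2_ae_eq_scalFn hf⟩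
  · rintro g ⟨k, a, ha, hg⟩
    obtain ⟨f, hf⟩ := h.exists_Lp_ae_eq_scalFn j m k a
    exact ⟨f, ⟨k, a, ha, hf⟩, Lp.ext ((h.dilL2_ae_eq_scalFn hf).trans hg.symm)⟩

theorem dilL2_mem_Vjm_iff (h : IsAdelicHaar μp μ) {f : Lp ℂ 2 μ} :
    h.dilL2 m f ∈ Vjm μ (j + 1) m ↔ f ∈ Vjm μ j m := by
  rw [Vjm_eq_closure_span_scalVecs, Vjm_eq_closure_span_scalVecs, ← h.image_dilL2_scalVecs]
  refine Iff.trans ?_ (map_mem_topologicalClosure_map_iff (h.dilL2 m))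
  rw [Submodule.map_span]
  rfl

theorem mem_Vjm_iff_of_ae_eq_dilation (h : IsAdelicHaar μp μ) {S : Finset Nat.Primes}
    (hS : ∀ q : Nat.Primes, q ∈ S ↔ (q : ℕ) ≤ m) {f g : Lp ℂ 2 μ}
    (hg : g =ᵐ[μ] fun x => ((√(2 * ∏ q ∈ S, ((q : ℕ) : ℝ)) : ℝ) : ℂ) * f (dilMap m x)) :
    f ∈ Vjm μ j m ↔ g ∈ Vjm μ (j + 1) m := by
  obtain rfl : S = (primesLE_finite m).toFinset := by
    ext q
    simp [hS]
  have hconst : (dilConst m : ℝ) = 2 * ∏ q ∈ (primesLE_finite m).toFinset, ((q : ℕ) : ℝ) := by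
    simp [dilConst]
  rw [← hconst] at hg
  rw [Lp.ext (hg.trans (h.coeFn_dilL2 f).symm), h.dilL2_mem_Vjm_iff]

end IsAdelicHaar

theorem integral_mul_conj_eq_inner {α : Type*} [MeasurableSpace α] {μ : Measure α}
    {f g : Lp ℂ 2 μ} {F G : α → ℂ} (hf : f =ᵐ[μ] F) (hg : g =ᵐ[μ] G) :
    ∫ x, F x * (starRingEnd ℂ) (G x) ∂μ = inner ℂ g f := by
  rw [L2.inner_def]
  refine integral_congr_ae ?_
  filter_upwards [hf, hg] with x hfx hgx
  rw [hfx, hgx, RCLike.inner_apply]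

theorem shiftPhi_eq_scalFn {m : Nat.Primes} {k : ℤ} {a : ∀ q : Nat.Primes, ℚ_[(q : ℕ)]}
    (ha : ∀ q : Nat.Primes, ¬ (q : ℕ) ≤ m → a q = 0) : shiftPhi k a = scalFn 0 m k a := by
  funext x
  have hfactor (q : Nat.Primes) :
      indZ q (x.1.2 q - a q) = if (q : ℕ) ≤ m then ((((q : ℕ) : ℝ) ^ (((0 : ℤ) : ℝ) / 2) : ℝ) : ℂ) *
        indZ q (((q : ℕ) : ℚ_[(q : ℕ)]) ^ (-0 : ℤ) * x.1.2 q - a q) else indZ q (x.1.2 q) := by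
    split_ifs with hq
    · simp
    · rw [ha q hq, sub_zero]
  rw [shiftPhi, scalFn, tprod_congr hfactor]
  simp

namespace IAdele

open Adele

variable {s t : IAdele}

/-- The shift `â`, as an adele. -/
def toAdele (t : IAdele) : Adele :=
  ⟨(t.1, t.2.1), by
    filter_upwards [t.2.2.2.compl_mem_cofinite] with q hq
    simp [show t.2.1 q = 0 from not_not.1 hq]⟩

theorem exists_forall_eq_zero (t : IAdele) :
    ∃ m : Nat.Primes, ∀ q : Nat.Primes, ¬ (q : ℕ) ≤ m → t.2.1 q = 0 := by
  obtain ⟨m, hm⟩ := exists_prime_forall_le t.2.2.2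
  exact ⟨m, fun q hq => not_not.1 fun h => hq (hm q h)⟩

theorem mem_cell_toAdele_iff {x : Adele} :
    x ∈ cell 0 0 t.toAdele ↔ ⌊x.1.1⌋ = t.1 ∧ ∀ q, ‖x.1.2 q - t.2.1 q‖ ≤ 1 := by
  simp [cell, toAdele, dist_eq_norm]

theorem eq_of_toAdele_mem_cell (h : t.toAdele ∈ cell 0 0 s.toAdele) : t = s := by
  obtain ⟨hreal, hpadic⟩ := mem_cell_toAdele_iff.1 h
  refine Prod.ext (by simpa [toAdele] using hreal) (Subtype.ext (funext fun q => ?_))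
  exact eq_of_mem_Ip_of_norm_sub_le_one (t.2.2.1 q) (s.2.2.1 q) (hpadic q)

theorem exists_mem_cell_toAdele (x : Adele) : ∃ t : IAdele, x ∈ cell 0 0 t.toAdele := by
  choose a ha hxa using fun q : Nat.Primes => exists_mem_Ip_norm_sub_le_one (x.1.2 q)
  refine ⟨⟨⌊x.1.1⌋, fun q => if ‖x.1.2 q‖ ≤ 1 then 0 else a q, fun q => ?_,
    x.finite_not_integral.subset fun q hq hxq => hq (if_pos hxq)⟩,
    mem_cell_toAdele_iff.2 ⟨rfl, fun q => ?_⟩⟩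
  · beta_reduce
    split_ifs
    exacts [zero_mem_Ip, ha q]
  · by_cases hxq : ‖x.1.2 q‖ ≤ 1
    · simp [hxq]
    · simpa [hxq] using hxa q

end IAdele

namespace IsAdelicHaar

open Adele
open scoped InnerProductSpace

variable {μp : ∀ q : Nat.Primes, Measure ℚ_[(q : ℕ)]} {μ : Measure Adele}

theorem shiftPhi_ae_eq_cellVec (h : IsAdelicHaar μp μ) (t : IAdele) :
    shiftPhi t.1 t.2.1 =ᵐ[μ] h.cellVec 0 0 t.toAdele := by
  obtain ⟨m, hm⟩ := t.exists_forall_eq_zero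
  have hmem : t.toAdele ∈ scalCell 0 m t.1 t.2.1 := by
    refine ⟨by simp [IAdele.toAdele], fun q => ?_⟩
    split_ifs with hq
    · simp [IAdele.toAdele]
    · simp [IAdele.toAdele, hm q hq]
  rw [shiftPhi_eq_scalFn hm]
  simpa only [scalConst_zero, ofReal_one, one_smul, level_zero] using
    h.scalFn_ae_eq_smul_cellVec hmem

theorem cellVec_zero_mem_VjAd (h : IsAdelicHaar μp μ) (x : Adele) :
    h.cellVec 0 0 x ∈ VjAd μ 0 := by
  obtain ⟨m, hm⟩ := exists_prime_forall_le x.finite_not_integral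
  rw [← level_zero (m := m)]
  exact Vjm_le_VjAd m (h.cellVec_mem_Vjm fun q hq => not_not.1 fun hxq => hq (hm q hxq))

theorem inner_cellVec_toAdele (h : IsAdelicHaar μp μ) (s t : IAdele) :
    ⟪h.cellVec 0 0 s.toAdele, h.cellVec 0 0 t.toAdele⟫_ℂ = if t = s then 1 else 0 := by
  rw [h.inner_cellVec_cellVec]
  split_ifs with hts
  · rw [hts, Set.inter_self, measureReal_def, h.measure_cell]
    simp
  · have hdisj : Disjoint (cell 0 0 s.toAdele) (cell 0 0 t.toAdele) :=
      cell_eq_or_disjoint.resolve_left fun heq =>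
        hts (IAdele.eq_of_toAdele_mem_cell (heq ▸ mem_cell_self))
    rw [hdisj.inter_eq, measureReal_empty, ofReal_zero]

theorem eq_zero_of_mem_VjAd_zero (h : IsAdelicHaar μp μ) {f : Lp ℂ 2 μ} (hf : f ∈ VjAd μ 0)
    (horth : ∀ t : IAdele, ⟪h.cellVec 0 0 t.toAdele, f⟫_ℂ = 0) : f = 0 := by
  have hle : VjAd μ 0 ≤ (ℂ ∙ f)ᗮ :=
    VjAd_le (Submodule.isClosed_orthogonal _) fun m =>
      h.Vjm_le (Submodule.isClosed_orthogonal _) fun x _ => by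
        obtain ⟨t, ht⟩ := IAdele.exists_mem_cell_toAdele x
        rw [level_zero, h.cellVec_congr (cell_eq_of_mem ht),
          Submodule.mem_orthogonal_singleton_iff_inner_left, horth t]
  exact inner_self_eq_zero.1 (Submodule.mem_orthogonal_singleton_iff_inner_left.1 (hle hf))

end IsAdelicHaar

/-- Properties of the adelic multiresolution analysis: the spaces
`V_j` are increasing (a), their union is dense in `L²(𝔸, μ)` (b), their intersection is
trivial (c), `f ∈ V_j^{[m]}` iff the `m`-dilation of `f` lies in `V_{j+1}^{[m]}` (d), and
the integer/`I_q`-shifts of the scaling function `Φ` form an orthonormal basis of `V_0`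
(e).  Here `μ` is the adelic Haar measure, normalized as the product of Lebesgue measure
and of the Haar measures `μ_p` with `μ_p(ℤ_p) = 1`. -/
theorem adelic_MRA
    (μp : ∀ q : Nat.Primes, Measure ℚ_[(q : ℕ)])
    (hHaar : ∀ q, (μp q).IsAddHaarMeasure)
    (hnorm : ∀ q, μp q {x : ℚ_[(q : ℕ)] | ‖x‖ ≤ 1} = 1)
    (μ : Measure Adele)
    (hμ : ∀ E : Set ℝ, MeasurableSet E → ∀ S : Finset Nat.Primes,
      ∀ B : ∀ q : Nat.Primes, Set ℚ_[(q : ℕ)], (∀ q, MeasurableSet (B q)) →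
      μ {x : Adele | x.1.1 ∈ E ∧ (∀ q ∈ S, x.1.2 q ∈ B q) ∧ ∀ q ∉ S, ‖x.1.2 q‖ ≤ 1}
        = volume E * ∏ q ∈ S, μp q (B q)) :
    (∀ j : ℤ, VjAd μ j ≤ VjAd μ (j + 1)) ∧
    Dense (⋃ j : ℤ, (VjAd μ j : Set (Lp ℂ 2 μ))) ∧
    (⨅ j : ℤ, VjAd μ j) = ⊥ ∧
    (∀ (m : Nat.Primes) (S : Finset Nat.Primes),
      (∀ q : Nat.Primes, q ∈ S ↔ (q : ℕ) ≤ (m : ℕ)) →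
      ∀ (j : ℤ) (f g : Lp ℂ 2 μ),
        (g : Adele → ℂ) =ᵐ[μ]
          (fun x => ((Real.sqrt (2 * ∏ q ∈ S, ((q : ℕ) : ℝ)) : ℝ) : ℂ) *
            (f : Adele → ℂ) (dilMap m x)) →
        (f ∈ Vjm μ j m ↔ g ∈ Vjm μ (j + 1) m)) ∧
    ((∀ t s : IAdele,
        ∫ x, shiftPhi t.1 t.2.1 x * (starRingEnd ℂ) (shiftPhi s.1 s.2.1 x) ∂μ
          = if t = s then 1 else 0) ∧
     (∀ t : IAdele, ∃ g : Lp ℂ 2 μ, g ∈ VjAd μ 0 ∧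
        (g : Adele → ℂ) =ᵐ[μ] shiftPhi t.1 t.2.1) ∧
     (∀ f : Lp ℂ 2 μ, f ∈ VjAd μ 0 →
        (∀ t : IAdele,
          ∫ x, (f : Adele → ℂ) x * (starRingEnd ℂ) (shiftPhi t.1 t.2.1 x) ∂μ = 0) →
        f = 0)) := by
  have h : IsAdelicHaar μp μ := ⟨hHaar, hnorm, hμ⟩
  refine ⟨fun j => h.VjAd_mono (by lia), h.dense_iUnion_VjAd, h.iInf_VjAd,
    fun m S hS j f g hg => h.mem_Vjm_iff_of_ae_eq_dilation hS hg, fun t s => ?_, fun t => ?_,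
    fun f hf horth => h.eq_zero_of_mem_VjAd_zero hf fun t => ?_⟩
  · rw [integral_mul_conj_eq_inner (h.shiftPhi_ae_eq_cellVec t).symm
      (h.shiftPhi_ae_eq_cellVec s).symm, h.inner_cellVec_toAdele]
  · exact ⟨_, h.cellVec_zero_mem_VjAd t.toAdele, (h.shiftPhi_ae_eq_cellVec t).symm⟩
  · rw [← integral_mul_conj_eq_inner Filter.EventuallyEq.rfl (h.shiftPhi_ae_eq_cellVec t).symm,
      horth t]
end
end

section
/- Let m be a prime, and for each prime q ≤ m let 𝒜_q : ℚ_q → ℂ be locally constant on ℚ_q ∖ {0}. For each prime q ≤ m fix k_q ∈ {1,…,q−1}, an integer j_q ≥ 0, and a_q ∈ I_q, and define Ψ ∈ L²(Ã, μ̃) by Ψ(x) = ∏_{q≤m} ψ^{(0)}_{k_q; j_q a_q}(x_q) · ∏_{q>m} 1_{ℤ_q}(x_q). Let 𝒜 : Ã → ℂ, 𝒜(ξ) = ∏_{q≤m} 𝒜_q(ξ_q) · ∏_{q>m} 1_{ℤ_q}(ξ_q), and set AΨ := 𝓕̃^{−1}[𝒜 · 𝓕̃Ψ] (well defined, since 𝓕̃Ψ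 is bounded with compact support not meeting the set where some coordinate ξ_q, q ≤ m, vanishes). Then Ψ is an eigenfunction of A, i.e. AΨ = λΨ for some λ ∈ ℂ, if and only if for all choices of η_q ∈ ℤ_q (q ≤ m) one has ∏_{q≤m} 𝒜_q(q^{−j_q} η_q − q^{−j_q−1} k_q) = ∏_{q≤m} 𝒜_q(−q^{−j_q−1} k_q); in that case the eigenvalue is λ = ∏_{q≤m} 𝒜_q(−q^{−j_q−1} k_q). -/
/-!
The Fourier transform of the wavelet `ψ⁰_{k;ja}` of `ℚ_q` is supported on the ball
`{q ^ (-j) * η - q ^ (-j - 1) * k | η ∈ ℤ_q}`, which does not contain `0`. Let `b_q` be the symbol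
`𝒜_q` on this ball as a function of `η ∈ ℤ_q`, extended by zero, and put `t = q ^ (-j) * x - a`.
Then `ψ⁰_{k;ja}(x)` is a nowhere vanishing factor times `1_{ℤ_q}(t) = (𝓕 1_{ℤ_q})(-t)`, and
`𝓕⁻¹[𝒜_q · 𝓕ψ⁰_{k;ja}](x)` is the same factor times `(𝓕 b_q)(-t)`.

Integrals of factorizable functions over the adeles are products of local integrals, and all
functions involved are continuous, so the eigenvalue equation says
`∏_q (𝓕 b_q)(t_q) = λ ∏_q (𝓕 1_{ℤ_q})(t_q)` for all `t`. Fourier inversion in every variable makes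
this equivalent to `∏_q b_q(η_q) = λ ∏_q 1_{ℤ_q}(η_q)` for all `η`; the value at `η = 0` is `λ`.
-/

open MeasureTheory Complex
open scoped Classical

noncomputable section

variable (p : ℕ) [Fact p.Prime]

/-- The finite adele ring of `ℚ`: the restricted product of the fields `ℚ_p` with respect
to the subrings `ℤ_p`. -/
def FiniteAdele : Type :=
  {x : ∀ q : Nat.Primes, ℚ_[(q : ℕ)] // ∀ᶠ q : Nat.Primes in Filter.cofinite, ‖x q‖ ≤ 1}

instance : MeasurableSpace FiniteAdele := by unfold FiniteAdele; infer_instance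

/-- The standard additive character `χ̃` of `Ã`, evaluated at `ξ·x`:
`χ̃(ξ·x) = ∏_q χ_q(ξ_q x_q)`. -/
def chiTilde (ξ x : FiniteAdele) : ℂ :=
  ∏' q : Nat.Primes, padicChar q (ξ.1 q * x.1 q)

/-- The Fourier transform on `Ã`: `𝓕̃f(ξ) = ∫ χ̃(ξ·x) f(x) dμ̃(x)` (as an integral; on
`L¹ ∩ L²` it agrees with the unitary `L²` Fourier transform). -/
def Ftilde (μ : MeasureTheory.Measure FiniteAdele) (f : FiniteAdele → ℂ)
    (ξ : FiniteAdele) : ℂ :=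
  ∫ x, chiTilde ξ x * f x ∂μ

/-- The inverse Fourier transform on `Ã`: `𝓕̃⁻¹f(x) = ∫ χ̃(-ξ·x) f(ξ) dμ̃(ξ)`. -/
def FtildeInv (μ : MeasureTheory.Measure FiniteAdele) (f : FiniteAdele → ℂ)
    (x : FiniteAdele) : ℂ :=
  ∫ ξ, (∏' q : Nat.Primes, padicChar q (-(ξ.1 q * x.1 q))) * f ξ ∂μ

/-- The adelic wavelet `Ψ(x) = ∏_{q ≤ m} ψ⁰_{k_q;j_q a_q}(x_q) ∏_{q > m} 1_{ℤ_q}(x_q)`. -/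
def PsiWav (m : Nat.Primes) (k : Nat.Primes → ℕ) (j : Nat.Primes → ℤ)
    (a : ∀ q : Nat.Primes, ℚ_[(q : ℕ)]) (x : FiniteAdele) : ℂ :=
  ∏' q : Nat.Primes,
    (if (q : ℕ) ≤ (m : ℕ) then kozyrev q (k q) (j q) (a q) (x.1 q)
     else indZ q (x.1 q))

/-- The symbol `𝒜(ξ) = ∏_{q ≤ m} 𝒜_q(ξ_q) ∏_{q > m} 1_{ℤ_q}(ξ_q)`. -/
def symbA (m : Nat.Primes) (A : ∀ q : Nat.Primes, ℚ_[(q : ℕ)] → ℂ)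
    (ξ : FiniteAdele) : ℂ :=
  ∏' q : Nat.Primes,
    (if (q : ℕ) ≤ (m : ℕ) then A q (ξ.1 q) else indZ q (ξ.1 q))

open Filter Topology

section PadicChar

variable {p}

variable (p) in
/-- The group `ℤ[1/p] ⊆ ℚ`, in which the fractional parts of `p`-adic numbers lie. -/
def pPowerFractions : AddSubgroup ℚ where
  carrier := {r | ∃ (m : ℤ) (n : ℕ), r = m / p ^ n}
  zero_mem' := ⟨0, 0, by simp⟩
  neg_mem' := by
    rintro _ ⟨m, n, rfl⟩
    exact ⟨-m, n, by push_cast; ring⟩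
  add_mem' := by
    rintro _ _ ⟨m, n, rfl⟩ ⟨m', n', rfl⟩
    have hp : (p : ℚ) ≠ 0 := by exact_mod_cast (Fact.out : p.Prime).ne_zero
    exact ⟨m * p ^ n' + m' * p ^ n, n + n', by push_cast; field_simp; ring⟩

lemma exists_eq_intCast_of_norm_le_one {r : ℚ} (hr : r ∈ pPowerFractions p)
    (h : ‖(r : ℚ_[p])‖ ≤ 1) : ∃ z : ℤ, r = z := by
  obtain ⟨m, n, rfl⟩ := hr
  have hp : 0 < p := (Fact.out : p.Prime).pos
  have hm : ‖(m : ℚ_[p])‖ ≤ (p : ℝ) ^ (-n : ℤ) := by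
    push_cast at h
    rw [norm_div, norm_pow, Padic.norm_p, div_le_one (by positivity)] at h
    rwa [zpow_neg, zpow_natCast, ← inv_pow]
  obtain ⟨c, rfl⟩ := (Padic.norm_int_le_pow_iff_dvd m n).1 hm
  exact ⟨c, by push_cast; field_simp⟩

lemma exists_mem_pPowerFractions_norm_sub_le_one (x : ℚ_[p]) :
    ∃ r : ℚ, (0 ≤ r ∧ r < 1 ∧ r ∈ pPowerFractions p) ∧ ‖x - (r : ℚ_[p])‖ ≤ 1 := by
  have hp : 0 < p := (Fact.out : p.Prime).pos
  have hp0 : (p : ℚ_[p]) ≠ 0 := by exact_mod_cast hp.ne'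
  obtain ⟨n, hn⟩ := pow_unbounded_of_one_lt ‖x‖
    (by exact_mod_cast (Fact.out : p.Prime).one_lt : (1 : ℝ) < p)
  have hx : ‖(p : ℚ_[p]) ^ n * x‖ ≤ 1 := by
    rw [norm_mul, norm_pow, Padic.norm_p, inv_pow, inv_mul_le_iff₀ (by positivity), mul_one]
    exact hn.le
  let z : ℤ_[p] := ⟨(p : ℚ_[p]) ^ n * x, hx⟩
  have hz : ‖(p : ℚ_[p]) ^ n * x - z.appr n‖ ≤ (p : ℝ) ^ (-n : ℤ) := by
    have := (PadicInt.norm_le_pow_iff_mem_span_pow (z - (z.appr n : ℤ_[p])) n).2 (z.appr_spec n)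
    rw [PadicInt.norm_def] at this
    push_cast at this
    exact this
  refine ⟨z.appr n / p ^ n, ⟨by positivity, ?_, z.appr n, n, by simp⟩, ?_⟩
  · rw [div_lt_one (by positivity)]
    exact_mod_cast z.appr_lt n
  · have hfactor : x - ((z.appr n / p ^ n : ℚ) : ℚ_[p])
        = ((p : ℚ_[p]) ^ n)⁻¹ * ((p : ℚ_[p]) ^ n * x - z.appr n) := by
      push_cast
      field_simp
    rw [hfactor, norm_mul, norm_inv, norm_pow, Padic.norm_p, inv_pow, inv_inv]
    calc (p : ℝ) ^ n * ‖(p : ℚ_[p]) ^ n * x - z.appr n‖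
        ≤ (p : ℝ) ^ n * (p : ℝ) ^ (-n : ℤ) := by gcongr
      _ = 1 := by rw [zpow_neg, zpow_natCast, mul_inv_cancel₀ (by positivity)]

lemma padicFract_spec (x : ℚ_[p]) :
    (0 ≤ padicFract p x ∧ padicFract p x < 1 ∧ padicFract p x ∈ pPowerFractions p) ∧
      ‖x - (padicFract p x : ℚ_[p])‖ ≤ 1 := by
  have h : ∃ r : ℚ, (0 ≤ r ∧ r < 1 ∧ ∃ (m : ℤ) (n : ℕ), r = m / p ^ n) ∧ ‖x - (r : ℚ_[p])‖ ≤ 1 :=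
    exists_mem_pPowerFractions_norm_sub_le_one x
  rw [padicFract, dif_pos h]
  exact h.choose_spec

lemma padicChar_eq_exp {x : ℚ_[p]} {r : ℚ} (hr : r ∈ pPowerFractions p)
    (hx : ‖x - (r : ℚ_[p])‖ ≤ 1) : padicChar p x = exp (2 * Real.pi * I * r) := by
  obtain ⟨⟨-, -, hmem⟩, hfract⟩ := padicFract_spec x
  have hdiff : ‖((padicFract p x - r : ℚ) : ℚ_[p])‖ ≤ 1 := by
    have := (PadicInt.subring p).sub_mem hx hfract
    rw [sub_sub_sub_cancel_left] at this
    exact_mod_cast this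
  obtain ⟨z, hz⟩ := exists_eq_intCast_of_norm_le_one (sub_mem hmem hr) hdiff
  rw [padicChar, sub_eq_iff_eq_add.1 hz]
  exact exp_eq_exp_iff_exists_int.2 ⟨z, by push_cast; ring⟩

lemma padicChar_add (x y : ℚ_[p]) : padicChar p (x + y) = padicChar p x * padicChar p y := by
  obtain ⟨⟨-, -, hx⟩, hx'⟩ := padicFract_spec x
  obtain ⟨⟨-, -, hy⟩, hy'⟩ := padicFract_spec y
  have hxy : ‖x + y - ((padicFract p x + padicFract p y : ℚ) : ℚ_[p])‖ ≤ 1 := by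
    push_cast
    rw [add_sub_add_comm]
    exact (PadicInt.subring p).add_mem hx' hy'
  rw [padicChar_eq_exp (add_mem hx hy) hxy, padicChar, padicChar, ← exp_add]
  push_cast
  ring_nf

lemma padicChar_eq_one_iff {x : ℚ_[p]} : padicChar p x = 1 ↔ ‖x‖ ≤ 1 := by
  constructor
  · intro h
    obtain ⟨⟨h0, h1, -⟩, hx⟩ := padicFract_spec x
    obtain ⟨n, hn⟩ := exp_eq_one_iff.1 h
    have hfract : padicFract p x = n := by
      rw [mul_comm] at hn
      exact_mod_cast mul_right_cancel₀ two_pi_I_ne_zero hn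
    have hn0 : n = 0 := by
      rw [hfract] at h0 h1
      have : 0 ≤ n := by exact_mod_cast h0
      have : n < 1 := by exact_mod_cast h1
      lia
    simpa [hfract, hn0] using hx
  · intro h
    simpa using padicChar_eq_exp (zero_mem (pPowerFractions p)) (x := x) (by simpa using h)

lemma padicChar_ne_zero (x : ℚ_[p]) : padicChar p x ≠ 0 := exp_ne_zero _

lemma norm_padicChar (x : ℚ_[p]) : ‖padicChar p x‖ = 1 := by
  simpa [padicChar, mul_right_comm] using
    norm_exp_ofReal_mul_I (2 * Real.pi * (padicFract p x : ℝ))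

lemma padicChar_add_of_norm_le_one (x : ℚ_[p]) {s : ℚ_[p]} (hs : ‖s‖ ≤ 1) :
    padicChar p (x + s) = padicChar p x := by
  rw [padicChar_add, padicChar_eq_one_iff.2 hs, mul_one]

lemma indZ_add_of_norm_le_one (x : ℚ_[p]) {s : ℚ_[p]} (hs : ‖s‖ ≤ 1) :
    indZ p (x + s) = indZ p x := by
  have : ‖x + s‖ ≤ 1 ↔ ‖x‖ ≤ 1 := (PadicInt.subring p).add_mem_cancel_right hs
  simp only [indZ, this]

lemma indZ_neg (x : ℚ_[p]) : indZ p (-x) = indZ p x := by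
  simp only [indZ, norm_neg]

lemma indZ_eq_indicator : indZ p = {x : ℚ_[p] | ‖x‖ ≤ 1}.indicator fun _ => 1 := by
  ext x
  simp [indZ, Set.indicator_apply]

lemma indZ_of_norm_le_one {x : ℚ_[p]} (hx : ‖x‖ ≤ 1) : indZ p x = 1 := if_pos hx

lemma indZ_of_one_lt_norm {x : ℚ_[p]} (hx : 1 < ‖x‖) : indZ p x = 0 := if_neg hx.not_ge

lemma indZ_mul_indZ : (fun x => indZ p x * indZ p x) = indZ p := by
  ext x
  simp [indZ]

lemma padicChar_mul_indZ {ξ : ℚ_[p]} (hξ : ‖ξ‖ ≤ 1) (x : ℚ_[p]) :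
    padicChar p (ξ * x) * indZ p x = indZ p x := by
  rcases le_or_gt ‖x‖ 1 with hx | hx
  · rw [padicChar_eq_one_iff.2 ((PadicInt.subring p).mul_mem hξ hx), one_mul]
  · rw [indZ_of_one_lt_norm hx, mul_zero]

lemma isLocallyConstant_of_forall_add_eq {E α : Type*} [SeminormedAddCommGroup E] {f : E → α}
    (hf : ∀ x s, ‖s‖ ≤ 1 → f (x + s) = f x) : IsLocallyConstant f := by
  refine (IsLocallyConstant.iff_eventually_eq f).2 fun x => ?_
  filter_upwards [Metric.closedBall_mem_nhds x one_pos] with y hy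
  simpa using hf x (y - x) (mem_closedBall_iff_norm.1 hy)

lemma continuous_padicChar : Continuous (padicChar p) :=
  (isLocallyConstant_of_forall_add_eq fun x _ => padicChar_add_of_norm_le_one x).continuous

lemma continuous_indZ : Continuous (indZ p) :=
  (isLocallyConstant_of_forall_add_eq fun x _ => indZ_add_of_norm_le_one x).continuous

lemma hasCompactSupport_mul_indZ (f : ℚ_[p] → ℂ) :
    HasCompactSupport fun x => f x * indZ p x :=
  .intro (isCompact_closedBall 0 1) fun x hx => by
    rw [indZ_of_one_lt_norm (by simpa using hx), mul_zero]

lemma hasCompactSupport_indZ : HasCompactSupport (indZ p) := by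
  simpa only [one_mul] using hasCompactSupport_mul_indZ (p := p) fun _ => 1

lemma continuous_mul_indZ {f : ℚ_[p] → ℂ} (hf : ContinuousOn f {x | ‖x‖ ≤ 1}) :
    Continuous fun x => f x * indZ p x := by
  have hclopen : IsClopen {x : ℚ_[p] | ‖x‖ ≤ 1} := by
    simpa [Metric.closedBall] using
      IsUltrametricDist.isClopen_closedBall (0 : ℚ_[p]) one_ne_zero
  simp only [indZ, mul_ite, mul_one, mul_zero]
  exact continuous_if (by simp [hclopen.frontier_eq]) (by rwa [hclopen.isClosed.closure_eq])
    continuousOn_const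

end PadicChar

section PadicFourier

open scoped Pointwise

lemma integral_comp_smul_eq_distribHaarChar_inv_smul {G V E : Type*} [Group G] [AddCommGroup V]
    [DistribMulAction G V] [TopologicalSpace V] [IsTopologicalAddGroup V] [LocallyCompactSpace V]
    [ContinuousConstSMul G V] [MeasurableSpace V] [BorelSpace V] (ν : Measure V)
    [ν.IsAddHaarMeasure] [ν.Regular] [NormedAddCommGroup E] [NormedSpace ℝ E] (g : G)
    (f : V → E) :
    ∫ x, f (g • x) ∂ν = (distribHaarChar V g)⁻¹ • ∫ x, f x ∂ν := by
  have hmap : ν.map (g • ·) = (distribHaarChar V g)⁻¹ • ν := by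
    ext s hs
    rw [Measure.map_apply (measurable_const_smul g) hs, Set.preimage_smul, ← distribHaarChar_mul,
      map_inv, Measure.smul_apply]
    rfl
  rw [← integral_smul_nnreal_measure, ← hmap]
  exact ((Homeomorph.smul g).measurableEmbedding.integral_map f).symm

variable {p} (ν : Measure ℚ_[p])

/-- The Fourier transform on `ℚ_p` with respect to the measure `ν`, with kernel `χ_p(ξx)`. -/
def padicFourier (f : ℚ_[p] → ℂ) (ξ : ℚ_[p]) : ℂ := ∫ x, padicChar p (ξ * x) * f x ∂ν

variable {ν}

lemma padicFourier_padicChar_mul (f : ℚ_[p] → ℂ) (s ξ : ℚ_[p]) :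
    padicFourier ν (fun x => padicChar p (s * x) * f x) ξ = padicFourier ν f (ξ + s) := by
  simp only [padicFourier, add_mul, padicChar_add, mul_assoc]

lemma padicFourier_mul_indZ_add (f : ℚ_[p] → ℂ) {s : ℚ_[p]} (hs : ‖s‖ ≤ 1) (t : ℚ_[p]) :
    padicFourier ν (fun x => f x * indZ p x) (t + s) =
      padicFourier ν (fun x => f x * indZ p x) t := by
  refine integral_congr_ae (.of_forall fun x => ?_)
  rcases le_or_gt ‖x‖ 1 with hx | hx
  · have hsx : ‖s * x‖ ≤ 1 := (PadicInt.subring p).mul_mem hs hx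
    simp only [add_mul, padicChar_add_of_norm_le_one _ hsx]
  · simp only [indZ_of_one_lt_norm hx, mul_zero]

/-- The pseudo-differential operator with symbol `A`, that is `𝓕⁻¹ ∘ A ∘ 𝓕`; since `χ_p` is a
character, `𝓕⁻¹` is `𝓕` followed by a reflection. -/
def padicMultiplier (ν : Measure ℚ_[p]) (A f : ℚ_[p] → ℂ) (x : ℚ_[p]) : ℂ :=
  padicFourier ν (fun ξ => A ξ * padicFourier ν f ξ) (-x)

/-- A wavelet of arbitrary frequency `s`, dilation `u` and shift `a`. The Kozyrev wavelet is the
case `s = k / p`, `u = p ^ (-j)`, up to its normalizing factor `p ^ (j / 2)`. -/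
def padicWavelet (s u a y : ℚ_[p]) : ℂ := padicChar p (s * (u * y - a)) * indZ p (u * y - a)

/-- The symbol `A` restricted to the support `{u * (η - s) | ‖η‖ ≤ 1}` of the Fourier transform
of `padicWavelet s u a`, in the coordinate `η`. -/
def waveletSymbol (A : ℚ_[p] → ℂ) (s u η : ℚ_[p]) : ℂ := A (u * (η - s)) * indZ p η

lemma padicFourier_const_mul (c : ℂ) (f : ℚ_[p] → ℂ) (ξ : ℚ_[p]) :
    padicFourier ν (fun x => c * f x) ξ = c * padicFourier ν f ξ := by
  simp only [padicFourier, mul_left_comm _ c, integral_const_mul]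

lemma padicMultiplier_const_mul (c : ℂ) (A f : ℚ_[p] → ℂ) (x : ℚ_[p]) :
    padicMultiplier ν A (fun y => c * f y) x = c * padicMultiplier ν A f x := by
  simp only [padicMultiplier, padicFourier_const_mul, mul_left_comm _ c]

/-- The character `χ_p` as a unitary additive character. -/
def padicAddChar : AddChar ℚ_[p] Circle where
  toFun x := ⟨padicChar p x, mem_sphere_zero_iff_norm.2 (norm_padicChar x)⟩
  map_zero_eq_one' := Circle.ext (padicChar_eq_one_iff.2 (by simp))
  map_add_eq_mul' x y := Circle.ext (padicChar_add x y)

lemma continuous_padicAddChar : Continuous (padicAddChar (p := p)) :=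
  continuous_padicChar.subtype_mk _

lemma padicFourier_eq_fourierIntegral (f : ℚ_[p] → ℂ) :
    padicFourier ν f =
      VectorFourier.fourierIntegral padicAddChar ν (-LinearMap.mul ℚ_[p] ℚ_[p]) f := by
  ext ξ
  simp only [padicFourier, VectorFourier.fourierIntegral, LinearMap.neg_apply, neg_neg,
    LinearMap.mul_apply', Circle.smul_def, mul_comm _ ξ]
  rfl

variable [ν.IsAddHaarMeasure]

lemma padicFourier_comp_sub (f : ℚ_[p] → ℂ) (a ξ : ℚ_[p]) :
    padicFourier ν (fun x => f (x - a)) ξ = padicChar p (ξ * a) * padicFourier ν f ξ := by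
  rw [padicFourier, ← integral_add_right_eq_self _ a, padicFourier, ← integral_const_mul]
  simp only [mul_add, padicChar_add, add_sub_cancel_right]
  congr! 2
  ring

lemma padicFourier_comp_units_mul (f : ℚ_[p] → ℂ) (u : ℚ_[p]ˣ) (ξ : ℚ_[p]) :
    padicFourier ν (fun x => f (u * x)) ξ =
      (distribHaarChar ℚ_[p] u)⁻¹ • padicFourier ν f (ξ * ↑u⁻¹) := by
  rw [padicFourier, padicFourier, ← integral_comp_smul_eq_distribHaarChar_inv_smul]
  simp only [Units.smul_def, smul_eq_mul, mul_assoc, Units.inv_mul_cancel_left]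

lemma padicFourier_indZ (hν : ν {x : ℚ_[p] | ‖x‖ ≤ 1} = 1) :
    padicFourier ν (indZ p) = indZ p := by
  ext ξ
  rcases le_or_gt ‖ξ‖ 1 with hξ | hξ
  · have hball : MeasurableSet {x : ℚ_[p] | ‖x‖ ≤ 1} := measurableSet_le (by fun_prop) (by fun_prop)
    simp only [padicFourier, padicChar_mul_indZ hξ]
    rw [indZ_of_norm_le_one hξ, indZ_eq_indicator, integral_indicator_const _ hball]
    simp [measureReal_def, hν]
  · have hinvariant : padicFourier ν (indZ p) ξ = padicChar p ξ * padicFourier ν (indZ p) ξ := by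
      conv_lhs => rw [← funext fun x => indZ_add_of_norm_le_one (p := p) x (s := -1) (by simp)]
      simpa only [← sub_eq_add_neg, mul_one] using padicFourier_comp_sub (indZ p) 1 ξ
    have hχ : padicChar p ξ ≠ 1 := fun h => hξ.not_ge (padicChar_eq_one_iff.1 h)
    rw [indZ_of_one_lt_norm hξ]
    exact by_contra fun h0 => hχ ((mul_eq_right₀ h0).1 hinvariant.symm)

lemma padicMultiplier_indZ (hν : ν {x : ℚ_[p] | ‖x‖ ≤ 1} = 1) :
    padicMultiplier ν (indZ p) (indZ p) = indZ p := by
  ext x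
  rw [padicMultiplier, padicFourier_indZ hν, indZ_mul_indZ, padicFourier_indZ hν, indZ_neg]

lemma mul_padicFourier_padicWavelet (hν : ν {x : ℚ_[p] | ‖x‖ ≤ 1} = 1) (A : ℚ_[p] → ℂ)
    (u : ℚ_[p]ˣ) (s a ξ : ℚ_[p]) :
    A ξ * padicFourier ν (padicWavelet s u a) ξ = (distribHaarChar ℚ_[p] u)⁻¹ •
      (padicChar p (a * (↑u⁻¹ * ξ)) * waveletSymbol A s u (↑u⁻¹ * ξ - -s)) := by
  have hFourier : padicFourier ν (padicWavelet s u a) ξ = (distribHaarChar ℚ_[p] u)⁻¹ •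
      (padicChar p (ξ * ↑u⁻¹ * a) * indZ p (ξ * ↑u⁻¹ + s)) := by
    unfold padicWavelet
    rw [padicFourier_comp_units_mul (fun y => padicChar p (s * (y - a)) * indZ p (y - a)),
      padicFourier_comp_sub (fun y => padicChar p (s * y) * indZ p y),
      padicFourier_padicChar_mul, padicFourier_indZ hν]
  rw [hFourier, mul_smul_comm, waveletSymbol]
  simp only [sub_neg_eq_add, add_sub_cancel_right, Units.mul_inv_cancel_left]
  rw [mul_left_comm, mul_comm ξ, mul_comm a]

lemma padicMultiplier_padicWavelet (hν : ν {x : ℚ_[p] | ‖x‖ ≤ 1} = 1) (A : ℚ_[p] → ℂ)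
    (u : ℚ_[p]ˣ) (s a x : ℚ_[p]) :
    padicMultiplier ν A (padicWavelet s u a) x =
      padicChar p (s * (u * x - a)) * padicFourier ν (waveletSymbol A s u) (-(u * x - a)) := by
  set g : ℚ_[p] → ℂ := fun y => padicChar p (a * y) * waveletSymbol A s u (y - -s) with hg
  calc padicMultiplier ν A (padicWavelet s u a) x
      = (distribHaarChar ℚ_[p] u)⁻¹ • padicFourier ν (fun ξ => g (↑u⁻¹ * ξ)) (-x) := by
        simp only [padicMultiplier, mul_padicFourier_padicWavelet hν]
        simp only [hg, padicFourier, NNReal.smul_def, mul_smul_comm, integral_smul]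
    _ = padicFourier ν g (-x * u) := by
        rw [padicFourier_comp_units_mul, map_inv, inv_inv, inv_inv,
          inv_smul_smul₀ distribHaarChar_pos.ne']
    _ = padicFourier ν (fun y => waveletSymbol A s u (y - -s)) (-x * u + a) :=
        padicFourier_padicChar_mul _ _ _
    _ = padicChar p (s * (u * x - a)) *
          padicFourier ν (waveletSymbol A s u) (-(u * x - a)) := by
        rw [padicFourier_comp_sub]
        ring_nf

section Kozyrev

lemma zpow_neg_mul_sub_div (j : ℤ) (η k : ℚ_[p]) :
    (p : ℚ_[p]) ^ (-j) * (η - k / p) = (p : ℚ_[p]) ^ (-j) * η - (p : ℚ_[p]) ^ (-j - 1) * k := by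
  have hp : (p : ℚ_[p]) ≠ 0 := by exact_mod_cast (Fact.out : p.Prime).ne_zero
  rw [zpow_sub_one₀ hp]
  ring

lemma zpow_neg_mul_sub_ne_zero {k : ℕ} (hk : ¬p ∣ k) (j : ℤ) {η : ℚ_[p]} (hη : ‖η‖ ≤ 1) :
    (p : ℚ_[p]) ^ (-j) * η - (p : ℚ_[p]) ^ (-j - 1) * k ≠ 0 := by
  have hp : (p : ℚ_[p]) ≠ 0 := by exact_mod_cast (Fact.out : p.Prime).ne_zero
  rw [← zpow_neg_mul_sub_div]
  refine mul_ne_zero (zpow_ne_zero _ hp) (sub_ne_zero.2 fun h => hk ?_)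
  have hnorm : ‖((k : ℤ) : ℚ_[p])‖ < 1 := by
    rw [Int.cast_natCast, ← mul_div_cancel₀ (k : ℚ_[p]) hp, ← h, norm_mul]
    exact mul_lt_one_of_nonneg_of_lt_one_left (norm_nonneg _) Padic.norm_p_lt_one hη
  exact_mod_cast Padic.norm_intCast_lt_one_iff.1 hnorm

lemma continuousOn_comp_zpow_neg_mul_sub {E : Type*} [TopologicalSpace E] {A : ℚ_[p] → E}
    (hA : ContinuousOn A {y | y ≠ 0}) {k : ℕ} (hk : ¬p ∣ k) (j : ℤ) :
    ContinuousOn (fun η => A ((p : ℚ_[p]) ^ (-j) * η - (p : ℚ_[p]) ^ (-j - 1) * k))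
      {η | ‖η‖ ≤ 1} :=
  hA.comp (by fun_prop) fun _ hη => zpow_neg_mul_sub_ne_zero hk j hη

variable (A : ℚ_[p] → ℂ) (k : ℕ) (j : ℤ) (a x : ℚ_[p])

lemma kozyrev_eq_const_mul_padicWavelet :
    kozyrev p k j a = fun y =>
      (((p : ℝ) ^ ((j : ℝ) / 2) : ℝ) : ℂ) * padicWavelet (k / p : ℚ_[p]) (p ^ (-j)) a y := by
  ext y
  rw [kozyrev, padicWavelet, mul_assoc]

lemma continuous_kozyrev : Continuous (kozyrev p k j a) := by
  unfold kozyrev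
  exact (continuous_const.mul (continuous_padicChar.comp (by fun_prop))).mul
    (continuous_indZ.comp (by fun_prop))

lemma padicMultiplier_kozyrev (hν : ν {x : ℚ_[p] | ‖x‖ ≤ 1} = 1) :
    padicMultiplier ν A (kozyrev p k j a) x =
      (((p : ℝ) ^ ((j : ℝ) / 2) : ℝ) *
        padicChar p ((k : ℚ_[p]) / p * ((p : ℚ_[p]) ^ (-j) * x - a))) *
      padicFourier ν (waveletSymbol A (k / p) (p ^ (-j))) (-((p : ℚ_[p]) ^ (-j) * x - a)) := by
  have hp : (p : ℚ_[p]) ≠ 0 := by exact_mod_cast (Fact.out : p.Prime).ne_zero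
  have hmul := padicMultiplier_padicWavelet hν A (Units.mk0 (p : ℚ_[p]) hp ^ (-j)) (k / p) a x
  rw [Units.val_zpow_eq_zpow_val, Units.val_mk0] at hmul
  rw [kozyrev_eq_const_mul_padicWavelet, padicMultiplier_const_mul, hmul, mul_assoc]

variable {A k j}

lemma continuous_waveletSymbol
    (hA : ContinuousOn (fun η => A ((p : ℚ_[p]) ^ (-j) * η - (p : ℚ_[p]) ^ (-j - 1) * k))
      {η | ‖η‖ ≤ 1}) :
    Continuous (waveletSymbol A (k / p) (p ^ (-j))) := by
  unfold waveletSymbol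
  simpa only [zpow_neg_mul_sub_div] using continuous_mul_indZ hA

lemma continuous_mul_padicFourier_kozyrev (hν : ν {x : ℚ_[p] | ‖x‖ ≤ 1} = 1)
    (hA : ContinuousOn (fun η => A ((p : ℚ_[p]) ^ (-j) * η - (p : ℚ_[p]) ^ (-j - 1) * k))
      {η | ‖η‖ ≤ 1}) :
    Continuous fun ξ => A ξ * padicFourier ν (kozyrev p k j a) ξ := by
  have hp : (p : ℚ_[p]) ≠ 0 := by exact_mod_cast (Fact.out : p.Prime).ne_zero
  have hmul := mul_padicFourier_padicWavelet hν A (Units.mk0 (p : ℚ_[p]) hp ^ (-j)) (k / p) a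
  rw [Units.val_zpow_eq_zpow_val, Units.val_mk0] at hmul
  simp only [kozyrev_eq_const_mul_padicWavelet, padicFourier_const_mul, mul_left_comm (A _), hmul]
  exact (((continuous_padicChar.comp (by fun_prop)).mul
    ((continuous_waveletSymbol hA).comp (by fun_prop))).const_smul _).const_mul _

lemma continuous_padicMultiplier_kozyrev (hν : ν {x : ℚ_[p] | ‖x‖ ≤ 1} = 1) :
    Continuous (padicMultiplier ν A (kozyrev p k j a)) := by
  have hFourier : Continuous (padicFourier ν (waveletSymbol A (k / p) (p ^ (-j)))) :=
    (isLocallyConstant_of_forall_add_eq fun t _ hs => padicFourier_mul_indZ_add _ hs t).continuous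
  simp only [funext fun x => padicMultiplier_kozyrev (ν := ν) A k j a x hν]
  exact (continuous_const.mul (continuous_padicChar.comp (by fun_prop))).mul
    (hFourier.comp (by fun_prop))

end Kozyrev

lemma integral_mul_padicFourier_comm {f g : ℚ_[p] → ℂ} (hf : Integrable f ν)
    (hg : Integrable g ν) :
    ∫ t, g t * padicFourier ν f t ∂ν = ∫ x, padicFourier ν g x * f x ∂ν := by
  have hflip : (-LinearMap.mul ℚ_[p] ℚ_[p]).flip = -LinearMap.mul ℚ_[p] ℚ_[p] := by
    ext; simp
  have hcont : Continuous fun y : ℚ_[p] × ℚ_[p] => (-LinearMap.mul ℚ_[p] ℚ_[p]) y.1 y.2 := by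
    simp only [LinearMap.neg_apply, LinearMap.mul_apply']
    fun_prop
  have hswap := VectorFourier.integral_fourierIntegral_smul_eq_flip (μ := ν) (ν := ν)
    continuous_padicAddChar hcont hg hf
  simpa only [padicFourier_eq_fourierIntegral, hflip, smul_eq_mul] using hswap.symm

lemma padicFourier_padicChar_mul_indZ_comp_units_mul (hν : ν {x : ℚ_[p] | ‖x‖ ≤ 1} = 1)
    (u : ℚ_[p]ˣ) (x₀ x : ℚ_[p]) :
    padicFourier ν (fun t => padicChar p (-x₀ * t) * indZ p (u * t)) x =
      (distribHaarChar ℚ_[p] u)⁻¹ • indZ p (↑u⁻¹ * (x - x₀)) := by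
  rw [padicFourier_padicChar_mul, padicFourier_comp_units_mul, padicFourier_indZ hν,
    ← sub_eq_add_neg, mul_comm]

lemma integral_cutoff_mul_padicFourier (hν : ν {x : ℚ_[p] | ‖x‖ ≤ 1} = 1)
    {f : ℚ_[p] → ℂ} (hf : Integrable f ν) (u : ℚ_[p]ˣ) (x₀ : ℚ_[p]) :
    ∫ t, padicChar p (-x₀ * t) * indZ p (u * t) * padicFourier ν f t ∂ν =
      ∫ y, indZ p y * f (u * y + x₀) ∂ν := by
  have hcutoff : Integrable (fun t => padicChar p (-x₀ * t) * indZ p (u * t)) ν := by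
    refine Continuous.integrable_of_hasCompactSupport ?_ ?_
    · exact (continuous_padicChar.comp (by fun_prop)).mul (continuous_indZ.comp (by fun_prop))
    · exact (hasCompactSupport_indZ.comp_homeomorph (Homeomorph.smul u)).mul_left
  rw [integral_mul_padicFourier_comm hf hcutoff]
  calc ∫ x, padicFourier ν (fun t => padicChar p (-x₀ * t) * indZ p (u * t)) x * f x ∂ν
      = ∫ x, (distribHaarChar ℚ_[p] u)⁻¹ • (indZ p (↑u⁻¹ * x) * f (x + x₀)) ∂ν := by
        rw [← integral_add_right_eq_self _ x₀]
        simp only [padicFourier_padicChar_mul_indZ_comp_units_mul hν, smul_mul_assoc,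
          add_sub_cancel_right]
    _ = ∫ y, indZ p y * f (u * y + x₀) ∂ν := by
        simp only [NNReal.smul_def, integral_smul]
        rw [← NNReal.smul_def, ← integral_comp_smul_eq_distribHaarChar_inv_smul]
        simp only [Units.smul_def, smul_eq_mul, Units.inv_mul_cancel_left]

lemma integral_indZ (hν : ν {x : ℚ_[p] | ‖x‖ ≤ 1} = 1) : ∫ x, indZ p x ∂ν = 1 := by
  have := congr_fun (padicFourier_indZ hν) 0
  simpa [padicFourier, indZ_of_norm_le_one, padicChar_eq_one_iff.2] using this

lemma tendsto_integral_indZ_mul_comp_pow_mul_add (hν : ν {x : ℚ_[p] | ‖x‖ ≤ 1} = 1)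
    {f : ℚ_[p] → ℂ} (hf : Continuous f) (hfc : HasCompactSupport f) (x₀ : ℚ_[p]) :
    Tendsto (fun N : ℕ => ∫ y, indZ p y * f ((p : ℚ_[p]) ^ N * y + x₀) ∂ν) atTop (𝓝 (f x₀)) := by
  obtain ⟨C, hC⟩ := hfc.exists_bound_of_continuous hf
  have hpow : Tendsto (fun N : ℕ => (p : ℚ_[p]) ^ N) atTop (𝓝 0) :=
    tendsto_pow_atTop_nhds_zero_of_norm_lt_one Padic.norm_p_lt_one
  rw [← one_mul (f x₀), ← integral_indZ hν, ← integral_mul_const]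
  refine tendsto_integral_of_dominated_convergence (fun y => ‖indZ p y‖ * C) (fun N => ?_) ?_
    (fun N => ?_) ?_
  · exact (continuous_indZ.mul (hf.comp (by fun_prop))).aestronglyMeasurable
  · exact (continuous_indZ.integrable_of_hasCompactSupport hasCompactSupport_indZ).norm.mul_const C
  · exact .of_forall fun y => by
      rw [norm_mul]
      exact mul_le_mul_of_nonneg_left (hC _) (norm_nonneg _)
  · exact .of_forall fun y => tendsto_const_nhds.mul <| (hf.tendsto x₀).comp <| by
      simpa using (hpow.mul_const y).add_const x₀

theorem tendsto_integral_cutoff_mul_padicFourier (hν : ν {x : ℚ_[p] | ‖x‖ ≤ 1} = 1)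
    {f : ℚ_[p] → ℂ} (hf : Continuous f) (hfc : HasCompactSupport f) (x₀ : ℚ_[p]) :
    Tendsto (fun N : ℕ => ∫ t, padicChar p (-x₀ * t) * indZ p ((p : ℚ_[p]) ^ N * t) *
      padicFourier ν f t ∂ν) atTop (𝓝 (f x₀)) := by
  have hp : (p : ℚ_[p]) ≠ 0 := by exact_mod_cast (Fact.out : p.Prime).ne_zero
  refine (tendsto_integral_indZ_mul_comp_pow_mul_add hν hf hfc x₀).congr fun N => ?_
  simpa using (integral_cutoff_mul_padicFourier hν (hf.integrable_of_hasCompactSupport hfc)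
    (Units.mk0 _ hp ^ N) x₀).symm

end PadicFourier

section FiniteProduct

lemma prod_integral_mul_eq {ι : Type*} [Fintype ι] {X : ι → Type*} [∀ i, MeasurableSpace (X i)]
    (ν : ∀ i, Measure (X i)) [∀ i, SigmaFinite (ν i)] {f g : ∀ i, X i → ℂ} {c : ℂ}
    (h : ∀ x : ∀ i, X i, ∏ i, f i (x i) = c * ∏ i, g i (x i)) (w : ∀ i, X i → ℂ) :
    ∏ i, ∫ x, w i x * f i x ∂ν i = c * ∏ i, ∫ x, w i x * g i x ∂ν i := by
  simp only [← integral_fintype_prod_eq_prod, ← integral_const_mul, Finset.prod_mul_distrib, h,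
    mul_left_comm c]

variable {ι : Type*} [Fintype ι] {p : ι → ℕ} [∀ i, Fact (p i).Prime] {ν : ∀ i, Measure ℚ_[p i]}
  [∀ i, (ν i).IsAddHaarMeasure]

theorem prod_padicFourier_eq_iff (hν : ∀ i, ν i {x : ℚ_[p i] | ‖x‖ ≤ 1} = 1)
    {f g : ∀ i, ℚ_[p i] → ℂ} (hf : ∀ i, Continuous (f i)) (hfc : ∀ i, HasCompactSupport (f i))
    (hg : ∀ i, Continuous (g i)) (hgc : ∀ i, HasCompactSupport (g i)) {c : ℂ} :
    (∀ t : ∀ i, ℚ_[p i], ∏ i, padicFourier (ν i) (f i) (t i) =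
        c * ∏ i, padicFourier (ν i) (g i) (t i)) ↔
      ∀ x : ∀ i, ℚ_[p i], ∏ i, f i (x i) = c * ∏ i, g i (x i) := by
  refine ⟨fun h x => ?_, fun h t => prod_integral_mul_eq ν h fun i y => padicChar (p i) (t i * y)⟩
  have hlim {f : ∀ i, ℚ_[p i] → ℂ} (hf : ∀ i, Continuous (f i))
      (hfc : ∀ i, HasCompactSupport (f i)) :
      Tendsto (fun N : ℕ => ∏ i, ∫ t, padicChar (p i) (-x i * t) *
        indZ (p i) ((p i : ℚ_[p i]) ^ N * t) * padicFourier (ν i) (f i) t ∂ν i) atTop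
        (𝓝 (∏ i, f i (x i))) :=
    tendsto_finsetProd _ fun i _ =>
      tendsto_integral_cutoff_mul_padicFourier (hν i) (hf i) (hfc i) (x i)
  refine tendsto_nhds_unique ((hlim hf hfc).congr fun N => ?_) ((hlim hg hgc).const_mul c)
  exact prod_integral_mul_eq ν h _

lemma prod_waveletSymbol_eq_iff (A : ∀ i, ℚ_[p i] → ℂ) (k : ι → ℕ) (j : ι → ℤ) {c : ℂ} :
    (∀ η : ∀ i, ℚ_[p i], ∏ i, waveletSymbol (A i) (k i / p i) (p i ^ (-j i)) (η i) =
        c * ∏ i, indZ (p i) (η i)) ↔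
      ∀ η : ∀ i, ℚ_[p i], (∀ i, ‖η i‖ ≤ 1) →
        ∏ i, A i ((p i : ℚ_[p i]) ^ (-j i) * η i - (p i : ℚ_[p i]) ^ (-j i - 1) * k i) = c := by
  simp only [waveletSymbol, zpow_neg_mul_sub_div, Finset.prod_mul_distrib]
  refine forall_congr' fun η => ?_
  by_cases hη : ∀ i, ‖η i‖ ≤ 1
  · simp [hη, indZ_of_norm_le_one]
  · obtain ⟨i, hi⟩ := not_forall.1 hη
    have hzero : ∏ i, indZ (p i) (η i) = 0 :=
      Finset.prod_eq_zero (Finset.mem_univ i) (indZ_of_one_lt_norm (not_le.1 hi))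
    simp only [hzero, mul_zero, hη, false_imp_iff]

theorem prod_padicMultiplier_kozyrev_eq_iff (hν : ∀ i, ν i {x : ℚ_[p i] | ‖x‖ ≤ 1} = 1)
    {A : ∀ i, ℚ_[p i] → ℂ} {k : ι → ℕ} {j : ι → ℤ} (a : ∀ i, ℚ_[p i])
    (hA : ∀ i, ContinuousOn
      (fun η => A i ((p i : ℚ_[p i]) ^ (-j i) * η - (p i : ℚ_[p i]) ^ (-j i - 1) * k i))
      {η | ‖η‖ ≤ 1}) {c : ℂ} :
    (∀ x : ∀ i, ℚ_[p i],
        ∏ i, padicMultiplier (ν i) (A i) (kozyrev (p i) (k i) (j i) (a i)) (x i) =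
          c * ∏ i, kozyrev (p i) (k i) (j i) (a i) (x i)) ↔
      ∀ η : ∀ i, ℚ_[p i], (∀ i, ‖η i‖ ≤ 1) →
        ∏ i, A i ((p i : ℚ_[p i]) ^ (-j i) * η i - (p i : ℚ_[p i]) ^ (-j i - 1) * k i) = c := by
  have hp (i : ι) : (p i : ℚ_[p i]) ≠ 0 := by exact_mod_cast (Fact.out : (p i).Prime).ne_zero
  have hcoord : Function.Surjective fun (x : ∀ i, ℚ_[p i]) i =>
      -((p i : ℚ_[p i]) ^ (-j i) * x i - a i) := fun t =>
    ⟨fun i => (p i : ℚ_[p i]) ^ j i * (a i - t i), funext fun i => by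
      simp [inv_mul_cancel_left₀ (zpow_ne_zero (j i) (hp i))]⟩
  rw [← prod_waveletSymbol_eq_iff, ← prod_padicFourier_eq_iff hν
    (fun i => continuous_waveletSymbol (hA i)) (fun i => hasCompactSupport_mul_indZ _)
    (fun i => continuous_indZ) (fun i => hasCompactSupport_indZ)]
  refine Iff.trans (forall_congr' fun x => ?_) hcoord.forall.symm
  have hfactor : ∏ i, (((p i : ℝ) ^ ((j i : ℝ) / 2) : ℝ) * padicChar (p i)
      ((k i : ℚ_[p i]) / p i * ((p i : ℚ_[p i]) ^ (-j i) * x i - a i))) ≠ 0 := by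
    refine Finset.prod_ne_zero_iff.2 fun i _ => mul_ne_zero ?_ (padicChar_ne_zero _)
    exact_mod_cast (Real.rpow_pos_of_pos (by exact_mod_cast (Fact.out : (p i).Prime).pos) _).ne'
  simp only [padicMultiplier_kozyrev (hν := hν _), kozyrev, padicFourier_indZ (hν _), indZ_neg,
    Finset.prod_mul_distrib (f := fun i => _ * padicChar (p i) _), mul_left_comm c]
  exact mul_right_inj' hfactor

end FiniteProduct

section Adelic

/-- The adeles whose components at the primes outside `T` are integral. -/
def integralAway (T : Finset Nat.Primes) : Set FiniteAdele := {x | ∀ q ∉ T, ‖x.1 q‖ ≤ 1}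

/-- The factorizable function `x ↦ ∏_q f_q(x_q)` on the finite adeles; it is meant for families
with `f_q = 1_{ℤ_q}` at almost every prime. -/
def adelicTensor (f : ∀ q : Nat.Primes, ℚ_[(q : ℕ)] → ℂ) (x : FiniteAdele) : ℂ :=
  ∏' q : Nat.Primes, f q (x.1 q)

/-- The factorizable function on the finite adeles with local factors `f_q` at the primes
`q ∈ T` and `1_{ℤ_q}` at all other primes. -/
def adelicExtension (T : Finset Nat.Primes) (f : ∀ q : Nat.Primes, ℚ_[(q : ℕ)] → ℂ) :
    FiniteAdele → ℂ :=
  adelicTensor (T.piecewise f fun q => indZ q)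

/-- `μ` is the restricted product of the measures `μp q` with respect to the subrings `ℤ_q`,
expressed by its values on the boxes `∏_{q ∈ T} B_q × ∏_{q ∉ T} ℤ_q`. -/
def IsRestrictedProduct (μp : ∀ q : Nat.Primes, Measure ℚ_[(q : ℕ)]) (μ : Measure FiniteAdele) :
    Prop :=
  ∀ T : Finset Nat.Primes, ∀ B : ∀ q : Nat.Primes, Set ℚ_[(q : ℕ)],
    (∀ q, MeasurableSet (B q)) →
    μ {x : FiniteAdele | (∀ q ∈ T, x.1 q ∈ B q) ∧ ∀ q ∉ T, ‖x.1 q‖ ≤ 1} = ∏ q ∈ T, μp q (B q)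

instance : Neg FiniteAdele :=
  ⟨fun x => ⟨fun q => -x.1 q, by simpa only [norm_neg] using x.2⟩⟩

variable {f g : ∀ q : Nat.Primes, ℚ_[(q : ℕ)] → ℂ} {T : Finset Nat.Primes}

lemma measurable_finiteAdele_apply (q : Nat.Primes) : Measurable fun x : FiniteAdele => x.1 q :=
  (measurable_pi_apply q).comp measurable_subtype_coe

lemma measurableSet_integralAway (T : Finset Nat.Primes) : MeasurableSet (integralAway T) := by
  simp only [integralAway, Set.ofPred_forall]
  exact .iInter fun q => .iInter fun _ =>
    measurableSet_le (measurable_finiteAdele_apply q).norm measurable_const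

lemma finite_mulSupport_of_eventually_eq_indZ (hf : ∀ᶠ q in cofinite, f q = indZ q)
    (x : FiniteAdele) : (fun q => f q (x.1 q)).HasFiniteMulSupport := by
  refine eventually_cofinite.1 ?_
  filter_upwards [hf, x.2] with q hq hx
  rw [hq, indZ_of_norm_le_one hx]

lemma adelicTensor_eq_indicator (hf : ∀ q ∉ T, f q = indZ q) :
    adelicTensor f = (integralAway T).indicator fun x => ∏ q : T, f q (x.1 q) := by
  ext x
  by_cases hx : x ∈ integralAway T
  · rw [Set.indicator_of_mem hx, Finset.prod_coe_sort T fun q => f q (x.1 q)]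
    exact tprod_eq_prod fun q hq => by rw [hf q hq, indZ_of_norm_le_one (hx q hq)]
  · rw [Set.indicator_of_notMem hx]
    obtain ⟨q, hq, hxq⟩ : ∃ q ∉ T, 1 < ‖x.1 q‖ := by simpa [integralAway] using hx
    have hfinite := finite_mulSupport_of_eventually_eq_indZ
      (T.eventually_cofinite_notMem.mono hf) x
    have hzero : f q (x.1 q) = 0 := by rw [hf q hq, indZ_of_one_lt_norm hxq]
    rw [adelicTensor, tprod_eq_finprod hfinite]
    exact finprod_eq_zero _ q hzero hfinite

lemma adelicExtension_eq_indicator (T : Finset Nat.Primes) (f : ∀ q : Nat.Primes, ℚ_[(q : ℕ)] → ℂ) :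
    adelicExtension T f = (integralAway T).indicator fun x => ∏ q : T, f q (x.1 q) := by
  rw [adelicExtension, adelicTensor_eq_indicator fun q hq => T.piecewise_eq_of_notMem _ _ hq]
  simp only [T.piecewise_eq_of_mem _ _ (Subtype.property _)]

lemma adelicTensor_mul (hf : ∀ᶠ q in cofinite, f q = indZ q)
    (hg : ∀ᶠ q in cofinite, g q = indZ q) (x : FiniteAdele) :
    adelicTensor f x * adelicTensor g x = adelicTensor (fun q y => f q y * g q y) x :=
  ((multipliable_of_hasFiniteMulSupport (finite_mulSupport_of_eventually_eq_indZ hf x)).tprod_mul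
    (multipliable_of_hasFiniteMulSupport (finite_mulSupport_of_eventually_eq_indZ hg x))).symm

lemma chiTilde_mul_adelicTensor (hf : ∀ᶠ q in cofinite, f q = indZ q) (ξ x : FiniteAdele) :
    chiTilde ξ x * adelicTensor f x =
      adelicTensor (fun q y => padicChar q (ξ.1 q * y) * f q y) x := by
  have hχ : (fun q : Nat.Primes => padicChar q (ξ.1 q * x.1 q)).HasFiniteMulSupport := by
    refine eventually_cofinite.1 ?_
    filter_upwards [ξ.2, x.2] with q hξ hx
    exact padicChar_eq_one_iff.2 ((PadicInt.subring (q : ℕ)).mul_mem hξ hx)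
  exact ((multipliable_of_hasFiniteMulSupport hχ).tprod_mul (multipliable_of_hasFiniteMulSupport
    (finite_mulSupport_of_eventually_eq_indZ hf x))).symm

lemma FtildeInv_eq_Ftilde_neg (μ : Measure FiniteAdele) (F : FiniteAdele → ℂ) (x : FiniteAdele) :
    FtildeInv μ F x = Ftilde μ F (-x) := by
  have hneg (ξ : FiniteAdele) (q : Nat.Primes) :
      padicChar q (-(ξ.1 q * x.1 q)) = padicChar q ((-x).1 q * ξ.1 q) := by
    rw [mul_comm, ← neg_mul]
    rfl
  simp only [FtildeInv, Ftilde, chiTilde, hneg]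

variable {μp : ∀ q : Nat.Primes, Measure ℚ_[(q : ℕ)]} [∀ q, (μp q).IsAddHaarMeasure]
  {μ : Measure FiniteAdele}

lemma map_restrict_integralAway (hμ : IsRestrictedProduct μp μ) (T : Finset Nat.Primes) :
    (μ.restrict (integralAway T)).map (fun x (q : T) => x.1 q) =
      Measure.pi fun q : T => μp q := by
  have hproj : Measurable fun (x : FiniteAdele) (q : T) => x.1 q :=
    measurable_pi_lambda _ fun q => measurable_finiteAdele_apply q
  refine (Measure.pi_eq fun B hB => ?_).symm
  let C (q : Nat.Primes) : Set ℚ_[(q : ℕ)] := if h : q ∈ T then B ⟨q, h⟩ else Set.univ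
  have hC (q : T) : C q = B q := dif_pos q.2
  have hCm (q : Nat.Primes) : MeasurableSet (C q) := by
    by_cases h : q ∈ T
    · exact hC ⟨q, h⟩ ▸ hB _
    · simp only [C, dif_neg h, MeasurableSet.univ]
  rw [Measure.map_apply hproj (.univ_pi hB), Measure.restrict_apply (hproj (.univ_pi hB))]
  simp only [← hC]
  rw [Finset.prod_coe_sort T fun q => μp q (C q), ← hμ T C hCm]
  congr 1
  ext x
  simp [integralAway, ← hC]

lemma integral_adelicTensor (hμ : IsRestrictedProduct μp μ) (hf : ∀ q ∉ T, f q = indZ q)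
    (hfm : ∀ q, AEStronglyMeasurable (f q) (μp q)) :
    ∫ x, adelicTensor f x ∂μ = ∏ q : T, ∫ y, f q y ∂μp q := by
  have hproj : Measurable fun (x : FiniteAdele) (q : T) => x.1 q :=
    measurable_pi_lambda _ fun q => measurable_finiteAdele_apply q
  rw [adelicTensor_eq_indicator hf, integral_indicator (measurableSet_integralAway T),
    ← integral_fintype_prod_eq_prod (fun q : T => f q), ← map_restrict_integralAway hμ,
    integral_map hproj.aemeasurable]
  rw [map_restrict_integralAway hμ]
  exact Finset.aestronglyMeasurable_fun_prod _ fun q _ =>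
    (hfm q).comp_quasiMeasurePreserving (Measure.quasiMeasurePreserving_eval _ q)

theorem Ftilde_adelicTensor (hμ : IsRestrictedProduct μp μ)
    (hnorm : ∀ q, μp q {x : ℚ_[(q : ℕ)] | ‖x‖ ≤ 1} = 1) (hf : ∀ᶠ q in cofinite, f q = indZ q)
    (hfm : ∀ q, AEStronglyMeasurable (f q) (μp q)) :
    Ftilde μ (adelicTensor f) = adelicTensor fun q => padicFourier (μp q) (f q) := by
  ext ξ
  obtain ⟨T, hT⟩ : ∃ T : Finset Nat.Primes, ∀ q ∉ T, f q = indZ q ∧ ‖ξ.1 q‖ ≤ 1 :=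
    ⟨(eventually_cofinite.1 (hf.and ξ.2)).toFinset, by simp⟩
  have hξ : ξ ∈ integralAway T := fun q hq => (hT q hq).2
  have hχf : ∀ q ∉ T, (fun y => padicChar q (ξ.1 q * y) * f q y) = indZ q := fun q hq => by
    rw [(hT q hq).1]
    exact funext fun y => padicChar_mul_indZ (hT q hq).2 y
  have hFf : ∀ q ∉ T, padicFourier (μp q) (f q) = indZ q := fun q hq => by
    rw [(hT q hq).1, padicFourier_indZ (hnorm q)]
  have hχfm (q : Nat.Primes) :
      AEStronglyMeasurable (fun y => padicChar q (ξ.1 q * y) * f q y) (μp q) :=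
    (continuous_padicChar.comp (continuous_const_mul _)).aestronglyMeasurable.mul (hfm q)
  simp only [Ftilde, chiTilde_mul_adelicTensor hf]
  rw [integral_adelicTensor hμ hχf hχfm, adelicTensor_eq_indicator hFf, Set.indicator_of_mem hξ]
  rfl

theorem FtildeInv_adelicTensor_mul_Ftilde_adelicTensor (hμ : IsRestrictedProduct μp μ)
    (hnorm : ∀ q, μp q {x : ℚ_[(q : ℕ)] | ‖x‖ ≤ 1} = 1) (hf : ∀ᶠ q in cofinite, f q = indZ q)
    (hg : ∀ᶠ q in cofinite, g q = indZ q) (hfm : ∀ q, AEStronglyMeasurable (f q) (μp q))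
    (hgm : ∀ q, AEStronglyMeasurable (fun ξ => g q ξ * padicFourier (μp q) (f q) ξ) (μp q)) :
    FtildeInv μ (fun ξ => adelicTensor g ξ * Ftilde μ (adelicTensor f) ξ) =
      adelicTensor fun q => padicMultiplier (μp q) (g q) (f q) := by
  have hFf : ∀ᶠ q in cofinite, padicFourier (μp q) (f q) = indZ q :=
    hf.mono fun q hq => by rw [hq, padicFourier_indZ (hnorm q)]
  have hgFf : ∀ᶠ q in cofinite, (fun ξ => g q ξ * padicFourier (μp q) (f q) ξ) = indZ q := by
    filter_upwards [hg, hFf] with q hgq hFfq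
    rw [hgq, hFfq, indZ_mul_indZ]
  ext x
  rw [FtildeInv_eq_Ftilde_neg, Ftilde_adelicTensor hμ hnorm hf hfm]
  simp only [adelicTensor_mul hg hFf]
  rw [Ftilde_adelicTensor hμ hnorm hgFf hgm]
  rfl

theorem FtildeInv_adelicExtension_mul_Ftilde_adelicExtension (hμ : IsRestrictedProduct μp μ)
    (hnorm : ∀ q, μp q {x : ℚ_[(q : ℕ)] | ‖x‖ ≤ 1} = 1)
    (hfm : ∀ q ∈ T, AEStronglyMeasurable (f q) (μp q))
    (hgm : ∀ q ∈ T, AEStronglyMeasurable (fun ξ => g q ξ * padicFourier (μp q) (f q) ξ) (μp q)) :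
    FtildeInv μ (fun ξ => adelicExtension T g ξ * Ftilde μ (adelicExtension T f) ξ) =
      adelicExtension T fun q => padicMultiplier (μp q) (g q) (f q) := by
  have hind (f : ∀ q : Nat.Primes, ℚ_[(q : ℕ)] → ℂ) :
      ∀ᶠ q in cofinite, T.piecewise f (fun q => indZ q) q = indZ q :=
    T.eventually_cofinite_notMem.mono fun q hq => T.piecewise_eq_of_notMem _ _ hq
  unfold adelicExtension
  rw [FtildeInv_adelicTensor_mul_Ftilde_adelicTensor hμ hnorm (hind f) (hind g)]
  · congr! 2 with q
    by_cases hq : q ∈ T <;> simp [hq, padicMultiplier_indZ (hnorm q)]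
  · intro q
    by_cases hq : q ∈ T <;> simp [hq, hfm, continuous_indZ.aestronglyMeasurable]
  · intro q
    by_cases hq : q ∈ T
    · simpa only [T.piecewise_eq_of_mem _ _ hq] using hgm q hq
    · simpa only [T.piecewise_eq_of_notMem _ _ hq, padicFourier_indZ (hnorm q), indZ_mul_indZ]
        using continuous_indZ.aestronglyMeasurable

theorem adelicExtension_ae_eq_const_mul_iff (hμ : IsRestrictedProduct μp μ)
    (hf : ∀ q ∈ T, Continuous (f q)) (hg : ∀ q ∈ T, Continuous (g q)) {c : ℂ} :
    (adelicExtension T f =ᵐ[μ] fun x => c * adelicExtension T g x) ↔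
      ∀ y : ∀ q : T, ℚ_[(q : ℕ)], ∏ q : T, f q (y q) = c * ∏ q : T, g q (y q) := by
  have hproj : Measurable fun (x : FiniteAdele) (q : T) => x.1 q :=
    measurable_pi_lambda _ fun q => measurable_finiteAdele_apply q
  have hF : Continuous fun y : ∀ q : T, ℚ_[(q : ℕ)] => ∏ q : T, f q (y q) :=
    continuous_finsetProd _ fun q _ => (hf q q.2).comp (continuous_apply q)
  have hG : Continuous fun y : ∀ q : T, ℚ_[(q : ℕ)] => ∏ q : T, g q (y q) :=
    continuous_finsetProd _ fun q _ => (hg q q.2).comp (continuous_apply q)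
  have hpi := hF.ae_eq_iff_eq (Measure.pi fun q : T => μp q) (hG.const_mul c)
  rw [funext_iff, ← map_restrict_integralAway hμ] at hpi
  rw [← hpi]
  refine Iff.trans ?_ (ae_map_iff hproj.aemeasurable
    (measurableSet_eq_fun hF.measurable (hG.const_mul c).measurable)).symm
  rw [ae_restrict_iff' (measurableSet_integralAway T)]
  refine eventually_congr (.of_forall fun x => ?_)
  rw [adelicExtension_eq_indicator, adelicExtension_eq_indicator]
  by_cases hx : x ∈ integralAway T <;> simp [hx]

end Adelic

section Eigenfunction

variable {μp : ∀ q : Nat.Primes, Measure ℚ_[(q : ℕ)]} [∀ q, (μp q).IsAddHaarMeasure]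
  {μ : Measure FiniteAdele} {S : Finset Nat.Primes} {A : ∀ q : Nat.Primes, ℚ_[(q : ℕ)] → ℂ}
  {k : Nat.Primes → ℕ} {j : Nat.Primes → ℤ}

lemma forall_integral_prod_coe_sort_eq_iff {F : ∀ q : Nat.Primes, ℚ_[(q : ℕ)] → ℂ} {c : ℂ} :
    (∀ η : ∀ q : S, ℚ_[(q : ℕ)], (∀ q, ‖η q‖ ≤ 1) → ∏ q : S, F q (η q) = c) ↔
      ∀ η : ∀ q : Nat.Primes, ℚ_[(q : ℕ)], (∀ q, ‖η q‖ ≤ 1) → ∏ q ∈ S, F q (η q) = c := by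
  refine ⟨fun h η hη => ?_, fun h η hη => ?_⟩
  · rw [← Finset.prod_coe_sort S fun q => F q (η q)]
    exact h (fun q => η q) fun q => hη q
  · let ζ (q : Nat.Primes) : ℚ_[(q : ℕ)] := if hq : q ∈ S then η ⟨q, hq⟩ else 0
    have hζ (q : S) : ζ q = η q := dif_pos q.2
    have hζ_norm (q : Nat.Primes) : ‖ζ q‖ ≤ 1 := by
      by_cases hq : q ∈ S
      · exact hζ ⟨q, hq⟩ ▸ hη _
      · simp [ζ, hq]
    simpa only [← Finset.prod_coe_sort S fun q => F q (ζ q), hζ] using h ζ hζ_norm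

theorem FtildeInv_mul_Ftilde_ae_eq_iff (hμ : IsRestrictedProduct μp μ)
    (hnorm : ∀ q, μp q {x : ℚ_[(q : ℕ)] | ‖x‖ ≤ 1} = 1) (a : ∀ q : Nat.Primes, ℚ_[(q : ℕ)])
    (hA : ∀ q ∈ S, ContinuousOn (fun η => A q (((q : ℕ) : ℚ_[(q : ℕ)]) ^ (-(j q)) * η
      - ((q : ℕ) : ℚ_[(q : ℕ)]) ^ (-(j q) - 1) * k q)) {η | ‖η‖ ≤ 1}) {c : ℂ} :
    (FtildeInv μ (fun ξ => adelicExtension S A ξ *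
        Ftilde μ (adelicExtension S fun q => kozyrev q (k q) (j q) (a q)) ξ)
      =ᵐ[μ] fun x => c * adelicExtension S (fun q => kozyrev q (k q) (j q) (a q)) x) ↔
    ∀ η : ∀ q : Nat.Primes, ℚ_[(q : ℕ)], (∀ q, ‖η q‖ ≤ 1) →
      ∏ q ∈ S, A q (((q : ℕ) : ℚ_[(q : ℕ)]) ^ (-(j q)) * η q
        - ((q : ℕ) : ℚ_[(q : ℕ)]) ^ (-(j q) - 1) * k q) = c := by
  rw [FtildeInv_adelicExtension_mul_Ftilde_adelicExtension hμ hnorm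
      (fun q _ => (continuous_kozyrev _ _ _).aestronglyMeasurable)
      (fun q hq =>
        (continuous_mul_padicFourier_kozyrev _ (hnorm q) (hA q hq)).aestronglyMeasurable),
    adelicExtension_ae_eq_const_mul_iff hμ
      (fun q _ => continuous_padicMultiplier_kozyrev _ (hnorm q))
      (fun q _ => continuous_kozyrev _ _ _)]
  exact (prod_padicMultiplier_kozyrev_eq_iff (fun q : S => hnorm q) (fun q => a q)
    fun q => hA q q.2).trans <| forall_integral_prod_coe_sort_eq_iff
      (F := fun q y => A q (((q : ℕ) : ℚ_[(q : ℕ)]) ^ (-(j q)) * y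
        - ((q : ℕ) : ℚ_[(q : ℕ)]) ^ (-(j q) - 1) * k q))

theorem wavelet_eigenfunction_iff_general (hμ : IsRestrictedProduct μp μ)
    (hnorm : ∀ q, μp q {x : ℚ_[(q : ℕ)] | ‖x‖ ≤ 1} = 1) (a : ∀ q : Nat.Primes, ℚ_[(q : ℕ)])
    (hA : ∀ q ∈ S, ContinuousOn (fun η => A q (((q : ℕ) : ℚ_[(q : ℕ)]) ^ (-(j q)) * η
      - ((q : ℕ) : ℚ_[(q : ℕ)]) ^ (-(j q) - 1) * k q)) {η | ‖η‖ ≤ 1}) :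
    ((∃ lam : ℂ,
        FtildeInv μ (fun ξ => adelicExtension S A ξ *
            Ftilde μ (adelicExtension S fun q => kozyrev q (k q) (j q) (a q)) ξ)
          =ᵐ[μ] fun x => lam * adelicExtension S (fun q => kozyrev q (k q) (j q) (a q)) x)
      ↔ (∀ η : ∀ q : Nat.Primes, ℚ_[(q : ℕ)], (∀ q, ‖η q‖ ≤ 1) →
          ∏ q ∈ S, A q (((q : ℕ) : ℚ_[(q : ℕ)]) ^ (-(j q)) * η q
              - ((q : ℕ) : ℚ_[(q : ℕ)]) ^ (-(j q) - 1) * k q)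
            = ∏ q ∈ S, A q (-(((q : ℕ) : ℚ_[(q : ℕ)]) ^ (-(j q) - 1) * k q)))) ∧
    ((∀ η : ∀ q : Nat.Primes, ℚ_[(q : ℕ)], (∀ q, ‖η q‖ ≤ 1) →
        ∏ q ∈ S, A q (((q : ℕ) : ℚ_[(q : ℕ)]) ^ (-(j q)) * η q
            - ((q : ℕ) : ℚ_[(q : ℕ)]) ^ (-(j q) - 1) * k q)
          = ∏ q ∈ S, A q (-(((q : ℕ) : ℚ_[(q : ℕ)]) ^ (-(j q) - 1) * k q))) →
      FtildeInv μ (fun ξ => adelicExtension S A ξ *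
          Ftilde μ (adelicExtension S fun q => kozyrev q (k q) (j q) (a q)) ξ)
        =ᵐ[μ] fun x => (∏ q ∈ S, A q (-(((q : ℕ) : ℚ_[(q : ℕ)]) ^ (-(j q) - 1) * k q))) *
          adelicExtension S (fun q => kozyrev q (k q) (j q) (a q)) x) := by
  simp only [FtildeInv_mul_Ftilde_ae_eq_iff hμ hnorm a hA]
  refine ⟨⟨fun ⟨lam, h⟩ => ?_, fun h => ⟨_, h⟩⟩, id⟩
  have hlam : ∏ q ∈ S, A q (-(((q : ℕ) : ℚ_[(q : ℕ)]) ^ (-(j q) - 1) * k q)) = lam := by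
    simpa using h 0 (by simp)
  rwa [hlam]

lemma symbA_eq_adelicExtension {m : Nat.Primes} (hS : ∀ q : Nat.Primes, q ∈ S ↔ (q : ℕ) ≤ m)
    (A : ∀ q : Nat.Primes, ℚ_[(q : ℕ)] → ℂ) : symbA m A = adelicExtension S A := by
  ext ξ
  simp only [symbA, adelicExtension, adelicTensor, Finset.piecewise, ite_apply, hS]

lemma PsiWav_eq_adelicExtension {m : Nat.Primes} (hS : ∀ q : Nat.Primes, q ∈ S ↔ (q : ℕ) ≤ m)
    (k : Nat.Primes → ℕ) (j : Nat.Primes → ℤ) (a : ∀ q : Nat.Primes, ℚ_[(q : ℕ)]) :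
    PsiWav m k j a = adelicExtension S fun q => kozyrev q (k q) (j q) (a q) := by
  ext x
  simp only [PsiWav, adelicExtension, adelicTensor, Finset.piecewise, ite_apply, hS]

end Eigenfunction

/-- The wavelet `Ψ` is an eigenfunction of the pseudo-differential
operator `A = 𝓕̃⁻¹ ∘ 𝒜 ∘ 𝓕̃` if and only if
`∏_{q ≤ m} 𝒜_q(q^{-j_q}η_q - q^{-j_q-1}k_q) = ∏_{q ≤ m} 𝒜_q(-q^{-j_q-1}k_q)` for all
`η_q ∈ ℤ_q`, and in that case the eigenvalue is `λ = ∏_{q ≤ m} 𝒜_q(-q^{-j_q-1}k_q)`.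
`μ` is the Haar measure on `Ã` normalized as the product of the Haar measures `μ_p` with
`μ_p(ℤ_p) = 1`, and `S` is the finite set of primes `q ≤ m`. -/
theorem wavelet_eigenfunction_iff
    (μp : ∀ q : Nat.Primes, MeasureTheory.Measure ℚ_[(q : ℕ)])
    (hHaar : ∀ q, (μp q).IsAddHaarMeasure)
    (hnorm : ∀ q, μp q {x : ℚ_[(q : ℕ)] | ‖x‖ ≤ 1} = 1)
    (μ : MeasureTheory.Measure FiniteAdele)
    (hμ : ∀ S : Finset Nat.Primes,
      ∀ B : ∀ q : Nat.Primes, Set ℚ_[(q : ℕ)], (∀ q, MeasurableSet (B q)) →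
      μ {x : FiniteAdele | (∀ q ∈ S, x.1 q ∈ B q) ∧ ∀ q ∉ S, ‖x.1 q‖ ≤ 1}
        = ∏ q ∈ S, μp q (B q))
    (m : Nat.Primes) (S : Finset Nat.Primes)
    (hS : ∀ q : Nat.Primes, q ∈ S ↔ (q : ℕ) ≤ (m : ℕ))
    (A : ∀ q : Nat.Primes, ℚ_[(q : ℕ)] → ℂ)
    (hA : ∀ q : Nat.Primes, (q : ℕ) ≤ (m : ℕ) →
      IsLocallyConstant (fun y : {y : ℚ_[(q : ℕ)] // y ≠ 0} => A q y.1))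
    (k : Nat.Primes → ℕ) (j : Nat.Primes → ℤ) (a : ∀ q : Nat.Primes, ℚ_[(q : ℕ)])
    (hk : ∀ q : Nat.Primes, (q : ℕ) ≤ (m : ℕ) → 1 ≤ k q ∧ k q ≤ (q : ℕ) - 1)
    (hj : ∀ q : Nat.Primes, (q : ℕ) ≤ (m : ℕ) → 0 ≤ j q)
    (ha : ∀ q : Nat.Primes, (q : ℕ) ≤ (m : ℕ) → a q ∈ Ip q) :
    ((∃ lam : ℂ,
        FtildeInv μ (fun ξ => symbA m A ξ * Ftilde μ (PsiWav m k j a) ξ)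
          =ᵐ[μ] fun x => lam * PsiWav m k j a x)
      ↔ (∀ η : ∀ q : Nat.Primes, ℚ_[(q : ℕ)], (∀ q, ‖η q‖ ≤ 1) →
          ∏ q ∈ S, A q (((q : ℕ) : ℚ_[(q : ℕ)]) ^ (-(j q)) * η q
              - ((q : ℕ) : ℚ_[(q : ℕ)]) ^ (-(j q) - 1) * (k q : ℚ_[(q : ℕ)]))
            = ∏ q ∈ S, A q (-(((q : ℕ) : ℚ_[(q : ℕ)]) ^ (-(j q) - 1)
                * (k q : ℚ_[(q : ℕ)]))))) ∧
    ((∀ η : ∀ q : Nat.Primes, ℚ_[(q : ℕ)], (∀ q, ‖η q‖ ≤ 1) →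
        ∏ q ∈ S, A q (((q : ℕ) : ℚ_[(q : ℕ)]) ^ (-(j q)) * η q
            - ((q : ℕ) : ℚ_[(q : ℕ)]) ^ (-(j q) - 1) * (k q : ℚ_[(q : ℕ)]))
          = ∏ q ∈ S, A q (-(((q : ℕ) : ℚ_[(q : ℕ)]) ^ (-(j q) - 1)
              * (k q : ℚ_[(q : ℕ)])))) →
      FtildeInv μ (fun ξ => symbA m A ξ * Ftilde μ (PsiWav m k j a) ξ)
        =ᵐ[μ] fun x =>
          (∏ q ∈ S, A q (-(((q : ℕ) : ℚ_[(q : ℕ)]) ^ (-(j q) - 1)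
            * (k q : ℚ_[(q : ℕ)])))) * PsiWav m k j a x) := by
  have hcont : ∀ q ∈ S, ContinuousOn (fun η => A q (((q : ℕ) : ℚ_[(q : ℕ)]) ^ (-(j q)) * η
      - ((q : ℕ) : ℚ_[(q : ℕ)]) ^ (-(j q) - 1) * (k q : ℚ_[(q : ℕ)]))) {η | ‖η‖ ≤ 1} := by
    intro q hq
    obtain ⟨hk_pos, hk_le⟩ := hk q ((hS q).1 hq)
    have hk_dvd : ¬(q : ℕ) ∣ k q :=
      Nat.not_dvd_of_pos_of_lt hk_pos (hk_le.trans_lt (Nat.pred_lt q.2.ne_zero))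
    exact continuousOn_comp_zpow_neg_mul_sub
      (continuousOn_iff_continuous_domRestrict.2 (hA q ((hS q).1 hq)).continuous) hk_dvd (j q)
  rw [symbA_eq_adelicExtension hS, PsiWav_eq_adelicExtension hS]
  exact wavelet_eigenfunction_iff_general hμ hnorm a hcont
end
end
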